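/- Fix real κ > 0 and η > 0. For every a ∈ (0, 1/2) and every M > 20 there exist f₀ > 0 and C > 0 such that for all f ∈ (0, f₀) and every z = re^{iθ} with r > f^a and −2π/3 + r^{−3/2}·M·f·log(r + f⁻¹) < θ < −r^{−3/2}·M·f·log(r + f⁻¹), one has |D_f(z) − F₁(z)| ≤ C·|F₁(z)|/log(r + f⁻¹), where F₁(z) = (g_{η/κ}(2κ·z^{1/2})/(2zη²))·exp(i·4z^{3/2}/(3f) + i·fκ²/(2z^{1/2})) is evaluated with the branch z^{1/2} = r^{1/2}e^{iθ/2}, z^{3/2} = r^{3/2}e^{3iθ/2} (log denotes the natural logarithm). -/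

import Mathlib

open Real

/-- Taylor coefficients of the Airy function `Ai`:
`a₀ = 3^{−2/3}/Γ(2/3)`, `a₁ = −3^{−1/3}/Γ(1/3)`, `a₂ = 0`,
`a_{k+3} = a_k/((k+3)(k+2))`. -/
noncomputable def airyCoeff : ℕ → ℂ
  | 0 => (3 : ℂ) ^ (-(2 : ℂ) / 3) / Complex.Gamma (2 / 3)
  | 1 => -((3 : ℂ) ^ (-(1 : ℂ) / 3) / Complex.Gamma (1 / 3))
  | 2 => 0
  | (k + 3) => airyCoeff k / (((k : ℂ) + 3) * ((k : ℂ) + 2))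

/-- The Airy function `Ai`, as the entire function with the above Taylor
coefficients at `0`. -/
noncomputable def Ai (z : ℂ) : ℂ := ∑' k : ℕ, airyCoeff k * z ^ k

/-- `ω = e^{2πi/3}` -/
noncomputable def ωc : ℂ := Complex.exp (2 * π * Complex.I / 3)

/-- `W = f^{1/3}·e^{−iπ/6}/(2π)` -/
noncomputable def Wf (f : ℝ) : ℂ :=
  ((f ^ ((1 : ℝ) / 3) : ℝ) : ℂ) * Complex.exp (-(π : ℂ) * Complex.I / 6) / (2 * π)

/-- `α₊(z) = Ai(−ω(z − κf)f^{−2/3})·Ai(−(z − κf)f^{−2/3})` -/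
noncomputable def alphaP (κ f : ℝ) (z : ℂ) : ℂ :=
  Ai (-ωc * (z - κ * f) * ((f ^ (-(2 : ℝ) / 3) : ℝ) : ℂ)) *
    Ai (-(z - κ * f) * ((f ^ (-(2 : ℝ) / 3) : ℝ) : ℂ))

/-- `α₋(z) = Ai(−ω(z + κf)f^{−2/3})·Ai(−(z + κf)f^{−2/3})` -/
noncomputable def alphaM (κ f : ℝ) (z : ℂ) : ℂ :=
  Ai (-ωc * (z + κ * f) * ((f ^ (-(2 : ℝ) / 3) : ℝ) : ℂ)) *
    Ai (-(z + κ * f) * ((f ^ (-(2 : ℝ) / 3) : ℝ) : ℂ))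

/-- `β₊(z) = Ai(−ω(z + κf)f^{−2/3})·Ai(−(z − κf)f^{−2/3})` -/
noncomputable def betaP (κ f : ℝ) (z : ℂ) : ℂ :=
  Ai (-ωc * (z + κ * f) * ((f ^ (-(2 : ℝ) / 3) : ℝ) : ℂ)) *
    Ai (-(z - κ * f) * ((f ^ (-(2 : ℝ) / 3) : ℝ) : ℂ))

/-- `β₋(z) = Ai(−ω(z − κf)f^{−2/3})·Ai(−(z + κf)f^{−2/3})` -/
noncomputable def betaM (κ f : ℝ) (z : ℂ) : ℂ :=
  Ai (-ωc * (z - κ * f) * ((f ^ (-(2 : ℝ) / 3) : ℝ) : ℂ)) *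
    Ai (-(z + κ * f) * ((f ^ (-(2 : ℝ) / 3) : ℝ) : ℂ))

/-- The resonance determinant `D_f` of the Stark Hamiltonian
`p² + fx + η⁻¹(δ_κ + δ_{−κ})`:
`D_f(z) = 1 + (α₊ + α₋)/(ηW) + β₊(β₋ − β₊)/(η²W²)`. -/
noncomputable def Df (κ η f : ℝ) (z : ℂ) : ℂ :=
  1 + (alphaP κ f z + alphaM κ f z) / (η * Wf f)
    + betaP κ f z * (betaM κ f z - betaP κ f z) / (η ^ 2 * (Wf f) ^ 2)

/-- `g_b(w) = sin(w) + b·w·cos(w)` -/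
noncomputable def gb (b : ℝ) (w : ℂ) : ℂ :=
  Complex.sin w + (b : ℂ) * w * Complex.cos w

section DeterminantAsymptotics

open MeasureTheory Filter Topology Set

/-- The moment `∫₀^∞ s^k e^{-s³/3} ds` in terms of the Gamma function. -/
noncomputable def airyMoment (k : ℕ) : ℝ :=
  (1 / 3 : ℝ) ^ (-((k : ℝ) + 1) / 3) * (1 / 3) * Real.Gamma (((k : ℝ) + 1) / 3)

lemma integral_pow_mul_exp_neg_cube (k : ℕ) :
    ∫ s in Ioi (0 : ℝ), s ^ k * Real.exp (-(s ^ 3 / 3)) = airyMoment k := by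
  have h := integral_rpow_mul_exp_neg_mul_rpow (p := 3) (q := k) (b := 1 / 3) (by norm_num)
    (by linarith [Nat.cast_nonneg (α := ℝ) k]) (by norm_num)
  rw [airyMoment, ← h]
  refine setIntegral_congr_fun measurableSet_Ioi fun s _ => ?_
  simp only [Real.rpow_natCast]
  rw [show (3 : ℝ) = ((3 : ℕ) : ℝ) by norm_num, Real.rpow_natCast]
  push_cast
  ring_nf

lemma airyMoment_add_three (k : ℕ) : airyMoment (k + 3) = (k + 1) * airyMoment k := by
  have hk : ((k : ℝ) + 1) / 3 ≠ 0 := by positivity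
  unfold airyMoment
  push_cast
  rw [show ((k : ℝ) + 3 + 1) / 3 = (k + 1) / 3 + 1 by ring, Real.Gamma_add_one hk,
    show -((k : ℝ) + 3 + 1) / 3 = -(k + 1) / 3 + (-1) by ring,
    Real.rpow_add (by norm_num), Real.rpow_neg_one]
  ring

lemma integrableOn_exp_mul_sub_cube (b : ℝ) (hb : 0 ≤ b) :
    IntegrableOn (fun s : ℝ => Real.exp (b * s) * Real.exp (-(s ^ 3 / 3))) (Ioi 0) := by
  have hdom : IntegrableOn (fun s : ℝ => Real.exp (3 * (b + 1) ^ 2) * Real.exp (-s)) (Ioi 0) :=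
    (integrableOn_exp_neg_Ioi 0).const_mul _
  refine Integrable.mono' hdom (by fun_prop) ?_
  refine (ae_restrict_mem measurableSet_Ioi).mono fun s hs => ?_
  have hs0 : (0 : ℝ) < s := hs
  rw [Real.norm_of_nonneg (by positivity), ← Real.exp_add, ← Real.exp_add, Real.exp_le_exp]
  rcases le_total s (3 * (b + 1)) with h | h
  · have : 0 ≤ s ^ 3 := by positivity
    nlinarith [mul_le_mul_of_nonneg_left h (by linarith : 0 ≤ b + 1)]
  · have h1 : 9 * (b + 1) ^ 2 ≤ s ^ 2 := by nlinarith
    have h2 : 3 * (b + 1) ≤ s ^ 2 := by nlinarith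
    have h3 : s * (3 * (b + 1)) ≤ s * s ^ 2 := mul_le_mul_of_nonneg_left h2 hs0.le
    nlinarith [sq_nonneg (b + 1)]

lemma hasSum_airy_ray (y : ℂ) :
    HasSum (fun k : ℕ => (-y) ^ k / (k.factorial : ℂ) * (airyMoment k : ℂ))
      (∫ s in Ioi (0 : ℝ), Complex.exp (-((s : ℂ) ^ 3 / 3) - y * s)) := by
  have key := MeasureTheory.hasSum_integral_of_dominated_convergence
    (μ := volume.restrict (Ioi (0 : ℝ)))
    (F := fun (k : ℕ) (s : ℝ) =>
      (-y) ^ k / (k.factorial : ℂ) * ((s ^ k * Real.exp (-(s ^ 3 / 3)) : ℝ) : ℂ))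
    (f := fun s : ℝ => Complex.exp (-((s : ℂ) ^ 3 / 3) - y * s))
    (fun k s => (‖y‖ * s) ^ k / (k.factorial : ℝ) * Real.exp (-(s ^ 3 / 3)))
    ?_ ?_ ?_ ?_ ?_
  · refine key.congr_fun fun k => ?_
    rw [integral_const_mul, integral_complex_ofReal, integral_pow_mul_exp_neg_cube]
  · intro k
    fun_prop
  · intro k
    refine (ae_restrict_mem measurableSet_Ioi).mono fun s hs => ?_
    have hs0 : (0 : ℝ) < s := hs
    simp only [norm_mul, norm_div, norm_pow, norm_neg, Complex.norm_natCast, Complex.norm_real]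
    rw [Real.norm_of_nonneg hs0.le, Real.norm_of_nonneg (Real.exp_pos _).le, mul_pow]
    apply le_of_eq
    ring
  · refine ae_of_all _ fun s => ?_
    exact (Real.summable_pow_div_factorial _).mul_right _
  · have : (fun s : ℝ => ∑' k : ℕ, (‖y‖ * s) ^ k / (k.factorial : ℝ) * Real.exp (-(s ^ 3 / 3)))
        = fun s => Real.exp (‖y‖ * s) * Real.exp (-(s ^ 3 / 3)) := by
      funext s
      rw [tsum_mul_right, Real.exp_eq_exp_ℝ, NormedSpace.exp_eq_tsum_div]
    rw [this]
    exact integrableOn_exp_mul_sub_cube _ (norm_nonneg y)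
  · refine ae_of_all _ fun s => ?_
    have h1 : HasSum (fun k : ℕ => (-y * s) ^ k / (k.factorial : ℂ)) (Complex.exp (-y * s)) := by
      rw [Complex.exp_eq_exp_ℂ]
      exact NormedSpace.expSeries_div_hasSum_exp _
    have h2 := h1.mul_right (Complex.exp (-((s : ℂ) ^ 3 / 3)))
    rw [← Complex.exp_add, show -y * s + -((s : ℂ) ^ 3 / 3) = -((s : ℂ) ^ 3 / 3) - y * s by ring]
      at h2
    refine h2.congr_fun fun k => ?_
    push_cast
    rw [mul_pow]
    ring

lemma airyCoeff_eq_moment (k : ℕ) :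
    airyCoeff k = (-1) ^ k / (k.factorial : ℂ) * (airyMoment k : ℂ) *
      ((Real.sin (((k : ℝ) + 1) * π / 3) / π : ℝ) : ℂ) := by
  induction k using Nat.strong_induction_on with
  | _ k ih =>
  match k with
  | 0 =>
    have hG := Real.Gamma_mul_Gamma_one_sub (1 / 3)
    rw [show (1 : ℝ) - 1 / 3 = 2 / 3 by norm_num, show π * (1 / 3) = π / 3 by ring] at hG
    have hG2 : Real.Gamma (2 / 3) ≠ 0 := (Real.Gamma_pos_of_pos (by norm_num)).ne'
    have hs : Real.sin (π / 3) ≠ 0 := by rw [Real.sin_pi_div_three]; positivity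
    have h1 : (3 : ℂ) ^ (-(2 : ℂ) / 3) = (((3 : ℝ) ^ (-(2 : ℝ) / 3) : ℝ) : ℂ) := by
      rw [Complex.ofReal_cpow (by norm_num)]; push_cast; rfl
    have h2 : Complex.Gamma (2 / 3) = ((Real.Gamma (2 / 3) : ℝ) : ℂ) := by
      rw [← Complex.Gamma_ofReal]; push_cast; rfl
    have h3 : (1 / 3 : ℝ) ^ (-((0 : ℕ) + 1 : ℝ) / 3) * (1 / 3) = (3 : ℝ) ^ (-(2 : ℝ) / 3) := by
      rw [one_div, Real.inv_rpow (by norm_num), ← Real.rpow_neg (by norm_num),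
        ← Real.rpow_neg_one, ← Real.rpow_add (by norm_num)]
      norm_num
    rw [eq_div_iff hs] at hG
    have h4 : (3 : ℝ) ^ (-(2 : ℝ) / 3) / Real.Gamma (2 / 3) =
        (3 : ℝ) ^ (-(2 : ℝ) / 3) * Real.Gamma (1 / 3) * (Real.sin (π / 3) / π) := by
      rw [div_eq_iff hG2, ← mul_div_assoc, div_mul_eq_mul_div, eq_div_iff Real.pi_ne_zero]
      linear_combination -((3 : ℝ) ^ (-(2 : ℝ) / 3)) * hG
    rw [airyCoeff, h1, h2, airyMoment, h3, ← Complex.ofReal_div, h4]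
    simp
  | 1 =>
    have hG := Real.Gamma_mul_Gamma_one_sub (1 / 3)
    rw [show (1 : ℝ) - 1 / 3 = 2 / 3 by norm_num, show π * (1 / 3) = π / 3 by ring] at hG
    have hG2 : Real.Gamma (1 / 3) ≠ 0 := (Real.Gamma_pos_of_pos (by norm_num)).ne'
    have hs : Real.sin (π / 3) ≠ 0 := by rw [Real.sin_pi_div_three]; positivity
    have hs2 : Real.sin ((((1 : ℕ) : ℝ) + 1) * π / 3) = Real.sin (π / 3) := by
      rw [← Real.sin_pi_sub]; congr 1; push_cast; ring
    have h1 : (3 : ℂ) ^ (-(1 : ℂ) / 3) = (((3 : ℝ) ^ (-(1 : ℝ) / 3) : ℝ) : ℂ) := by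
      rw [Complex.ofReal_cpow (by norm_num)]; push_cast; rfl
    have h2 : Complex.Gamma (1 / 3) = ((Real.Gamma (1 / 3) : ℝ) : ℂ) := by
      rw [← Complex.Gamma_ofReal]; push_cast; rfl
    have h3 : (1 / 3 : ℝ) ^ (-((1 : ℕ) + 1 : ℝ) / 3) * (1 / 3) = (3 : ℝ) ^ (-(1 : ℝ) / 3) := by
      rw [one_div, Real.inv_rpow (by norm_num), ← Real.rpow_neg (by norm_num),
        ← Real.rpow_neg_one, ← Real.rpow_add (by norm_num)]
      norm_num
    have h4 : (((1 : ℕ) : ℝ) + 1) / 3 = 2 / 3 := by norm_num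
    rw [eq_div_iff hs] at hG
    have h5 : (3 : ℝ) ^ (-(1 : ℝ) / 3) / Real.Gamma (1 / 3) =
        (3 : ℝ) ^ (-(1 : ℝ) / 3) * Real.Gamma (2 / 3) * (Real.sin (π / 3) / π) := by
      rw [div_eq_iff hG2, ← mul_div_assoc, div_mul_eq_mul_div, eq_div_iff Real.pi_ne_zero]
      linear_combination -((3 : ℝ) ^ (-(1 : ℝ) / 3)) * hG
    rw [airyCoeff, h1, h2, airyMoment, h3, hs2, h4, ← Complex.ofReal_div, h5]
    simp
  | 2 =>
    have : Real.sin ((((2 : ℕ) : ℝ) + 1) * π / 3) = 0 := by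
      rw [show (((2 : ℕ) : ℝ) + 1) * π / 3 = π by push_cast; ring, Real.sin_pi]
    rw [airyCoeff, this]
    simp
  | (j + 3) =>
    have hs : Real.sin ((((j + 3 : ℕ) : ℝ) + 1) * π / 3) = -Real.sin (((j : ℝ) + 1) * π / 3) := by
      rw [← Real.sin_add_pi]; congr 1; push_cast; ring
    rw [airyCoeff, ih j (by omega), airyMoment_add_three, hs, Nat.factorial_succ,
      Nat.factorial_succ, Nat.factorial_succ]
    have hj : (j.factorial : ℂ) ≠ 0 := by exact_mod_cast Nat.factorial_ne_zero j
    have h1 : (j : ℂ) + 1 ≠ 0 := by exact_mod_cast Nat.succ_ne_zero j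
    have h2 : (j : ℂ) + 2 ≠ 0 := by exact_mod_cast Nat.succ_ne_zero (j + 1)
    have h3 : (j : ℂ) + 3 ≠ 0 := by exact_mod_cast Nat.succ_ne_zero (j + 2)
    have hpi : (π : ℂ) ≠ 0 := by exact_mod_cast Real.pi_ne_zero
    push_cast
    rw [show (j : ℂ) + 2 + 1 = j + 3 by ring, show (j : ℂ) + 1 + 1 = j + 2 by ring]
    field_simp
    ring

lemma hasSum_airy_rays (x c c' : ℂ) (hc : c = Complex.exp (π / 3 * Complex.I))
    (hc' : c' = Complex.exp (-(π / 3 * Complex.I))) :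
    HasSum (fun k : ℕ => 2 * π * Complex.I * (airyCoeff k * x ^ k))
      (c * (∫ s in Ioi (0 : ℝ), Complex.exp (-((s : ℂ) ^ 3 / 3) - x * c * s)) -
      c' * (∫ s in Ioi (0 : ℝ), Complex.exp (-((s : ℂ) ^ 3 / 3) - x * c' * s))) := by
  have h := ((hasSum_airy_ray (x * c)).mul_left c).sub ((hasSum_airy_ray (x * c')).mul_left c')
  refine h.congr_fun fun k => ?_
  have hs : c ^ (k + 1) - c' ^ (k + 1) =
      2 * Complex.I * Complex.sin (((k : ℂ) + 1) * π / 3) := by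
    rw [Complex.sin, hc, hc', ← Complex.exp_nat_mul, ← Complex.exp_nat_mul]
    push_cast
    rw [show ((k : ℂ) + 1) * (π / 3 * Complex.I) = (k + 1) * π / 3 * Complex.I by ring,
      show ((k : ℂ) + 1) * -(π / 3 * Complex.I) = -((k + 1) * π / 3) * Complex.I by ring]
    linear_combination (Complex.exp ((k + 1) * π / 3 * Complex.I) -
      Complex.exp (-((k + 1) * π / 3) * Complex.I)) * Complex.I_sq
  have hpi : (π : ℂ) ≠ 0 := by exact_mod_cast Real.pi_ne_zero
  have hk : (k.factorial : ℂ) ≠ 0 := by exact_mod_cast Nat.factorial_ne_zero k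
  rw [airyCoeff_eq_moment]
  have e1 : (-(x * c)) ^ k = (-1) ^ k * x ^ k * c ^ k := by rw [← mul_pow, ← mul_pow]; ring
  have e2 : (-(x * c')) ^ k = (-1) ^ k * x ^ k * c' ^ k := by rw [← mul_pow, ← mul_pow]; ring
  rw [e1, e2]
  push_cast
  generalize Complex.sin (((k : ℂ) + 1) * π / 3) = S at hs ⊢
  rw [show 2 * π * Complex.I * ((-1) ^ k / (k.factorial : ℂ) * airyMoment k * (S / π) * x ^ k) =
    (-1) ^ k / (k.factorial : ℂ) * airyMoment k * x ^ k * (2 * Complex.I * S) by field_simp, ← hs]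
  ring

lemma two_pi_I_mul_Ai_eq_rays (x c c' : ℂ) (hc : c = Complex.exp (π / 3 * Complex.I))
    (hc' : c' = Complex.exp (-(π / 3 * Complex.I))) :
    2 * π * Complex.I * Ai x =
      c * (∫ s in Ioi (0 : ℝ), Complex.exp (-((s : ℂ) ^ 3 / 3) - x * c * s)) -
      c' * (∫ s in Ioi (0 : ℝ), Complex.exp (-((s : ℂ) ^ 3 / 3) - x * c' * s)) := by
  rw [← (hasSum_airy_rays x c c' hc hc').tsum_eq, Ai, ← tsum_mul_left]

lemma hasSum_Ai (x : ℂ) : HasSum (fun k : ℕ => airyCoeff k * x ^ k) (Ai x) := by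
  have h := (hasSum_airy_rays x _ _ rfl rfl).summable
  have h2 : (2 * π * Complex.I : ℂ) ≠ 0 := Complex.two_pi_I_ne_zero
  exact ((summable_mul_left_iff h2).mp h).hasSum

/-- The exponential kernel `e^{t³/3 - xt}` of the contour representation of `Ai`. -/
noncomputable def airyKernel (x t : ℂ) : ℂ := Complex.exp (t ^ 3 / 3 - x * t)

lemma differentiable_airyKernel (x : ℂ) : Differentiable ℂ (airyKernel x) := by
  unfold airyKernel
  fun_prop

lemma norm_airyKernel_le (x : ℂ) (u v : ℝ) :
    ‖airyKernel x (u + v * Complex.I)‖ ≤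
      Real.exp (u ^ 3 / 3 - u * v ^ 2 + ‖x‖ * (|u| + |v|)) := by
  rw [airyKernel, Complex.norm_exp, Real.exp_le_exp]
  have h1 : (((u : ℂ) + v * Complex.I) ^ 3 / 3).re = u ^ 3 / 3 - u * v ^ 2 := by
    have : ((u : ℂ) + v * Complex.I) ^ 3 / 3 =
        ((u ^ 3 / 3 - u * v ^ 2 : ℝ) : ℂ) + ((u ^ 2 * v - v ^ 3 / 3 : ℝ) : ℂ) * Complex.I := by
      push_cast
      linear_combination (u * v ^ 2 + v ^ 3 * Complex.I / 3) * Complex.I_sq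
    rw [this]
    simp [-Complex.ofReal_sub, -Complex.ofReal_div, -Complex.ofReal_mul]
  have h2 : -(x * (u + v * Complex.I)).re ≤ ‖x‖ * (|u| + |v|) := by
    calc -(x * (u + v * Complex.I)).re ≤ ‖x * (u + v * Complex.I)‖ :=
          (neg_le_abs _).trans (Complex.abs_re_le_norm _)
      _ ≤ ‖x‖ * (|u| + |v|) := by
          rw [norm_mul]
          gcongr
          refine (norm_add_le _ _).trans ?_
          simp
  rw [Complex.sub_re, h1]
  linarith

lemma integrable_airyKernel_vertical (x : ℂ) {p : ℝ} (hp : 0 < p) :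
    Integrable fun v : ℝ => airyKernel x (p + v * Complex.I) := by
  have hdom : Integrable fun v : ℝ =>
      Real.exp (p ^ 3 / 3 + ‖x‖ * p + ‖x‖ ^ 2 / (2 * p)) * Real.exp (-(p / 2) * v ^ 2) :=
    (integrable_exp_neg_mul_sq (by positivity)).const_mul _
  refine hdom.mono' ?_ (ae_of_all _ fun v => (norm_airyKernel_le x p v).trans ?_)
  · have := (differentiable_airyKernel x).continuous
    exact (by fun_prop : Continuous fun v : ℝ => airyKernel x (p + v * Complex.I)).aestronglyMeasurable
  · rw [← Real.exp_add, Real.exp_le_exp, abs_of_pos hp]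
    have h : ‖x‖ * |v| ≤ p / 2 * v ^ 2 + ‖x‖ ^ 2 / (2 * p) := by
      have h1 : ‖x‖ ^ 2 / (2 * p) = (‖x‖ / p) ^ 2 * (p / 2) := by field_simp
      have h2 : ‖x‖ * |v| = (‖x‖ / p) * |v| * p := by field_simp
      rw [h1, h2, ← sq_abs v]
      nlinarith [mul_nonneg hp.le (sq_nonneg (‖x‖ / p - |v|))]
    linarith

lemma tendsto_mul_exp_neg_sq (p b : ℝ) (hp : 0 < p) :
    Tendsto (fun S : ℝ => Real.exp (-(p * S ^ 2) + b * S) * S) atTop (𝓝 0) := by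
  have h : Tendsto (fun S : ℝ => S ^ 1 * Real.exp (-S)) atTop (𝓝 0) :=
    Real.tendsto_pow_mul_exp_neg_atTop_nhds_zero 1
  refine squeeze_zero' ?_ ?_ h
  · filter_upwards [eventually_ge_atTop 0] with S hS
    positivity
  · filter_upwards [eventually_ge_atTop 0, eventually_ge_atTop ((b + 1) / p)] with S hS hS2
    rw [pow_one, mul_comm S]
    gcongr
    rw [div_le_iff₀ hp] at hS2
    nlinarith

lemma tendsto_primitive_sub (x : ℂ) {p σ : ℝ} (hp : 0 < p) (hσ : σ ^ 2 = 3 / 4) {F : ℂ → ℂ}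
    (hF : ∀ t, HasDerivAt F (airyKernel x t) t) :
    Tendsto (fun S : ℝ => F (p + (σ * S : ℝ) * Complex.I) - F ((1 / 2 + σ * Complex.I) * S))
      atTop (𝓝 0) := by
  have hσ1 : |σ| ≤ 1 := by rw [← sq_le_one_iff_abs_le_one]; norm_num [hσ]
  refine squeeze_zero_norm' ?_ (tendsto_mul_exp_neg_sq (2 / 3 * p) (2 * ‖x‖) (by positivity))
  filter_upwards [eventually_ge_atTop (2 * p)] with S hS
  have hS0 : 0 < S := by linarith
  have hpS : p ≤ S / 2 := by linarith
  have hder : ∀ u ∈ Icc p (S / 2), HasDerivWithinAt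
      (fun u : ℝ => F (u + (σ * S : ℝ) * Complex.I))
      (airyKernel x (u + (σ * S : ℝ) * Complex.I)) (Icc p (S / 2)) u := by
    intro u _
    have h1 : HasDerivAt (fun u : ℝ => (u : ℂ) + (σ * S : ℝ) * Complex.I) 1 u :=
      (Complex.ofRealCLM.hasDerivAt (x := u)).add_const _
    have := (hF (u + (σ * S : ℝ) * Complex.I)).comp u h1
    rw [mul_one] at this
    exact this.hasDerivWithinAt
  have hbd : ∀ u ∈ Icc p (S / 2), ‖airyKernel x (u + (σ * S : ℝ) * Complex.I)‖ ≤
      Real.exp (-(2 / 3 * p * S ^ 2) + 2 * ‖x‖ * S) := by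
    intro u hu
    refine (norm_airyKernel_le x u (σ * S)).trans (Real.exp_le_exp.mpr ?_)
    have hu0 : 0 < u := hp.trans_le hu.1
    have h1 : |u| + |σ * S| ≤ 2 * S := by
      rw [abs_of_pos hu0, abs_mul, abs_of_pos hS0]
      nlinarith [hu.2]
    have h2 : u ^ 3 / 3 - u * (σ * S) ^ 2 ≤ -(2 / 3 * p * S ^ 2) := by
      rw [mul_pow, hσ]
      have h3 : u ^ 2 ≤ (S / 2) ^ 2 := by gcongr; exact hu.2
      nlinarith [mul_le_mul_of_nonneg_left h3 hu0.le, mul_le_mul_of_nonneg_right hu.1 (sq_nonneg S)]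
    nlinarith [mul_le_mul_of_nonneg_left h1 (norm_nonneg x)]
  have h := (convex_Icc p (S / 2)).norm_image_sub_le_of_norm_hasDerivWithin_le hder hbd
    (right_mem_Icc.mpr hpS) (left_mem_Icc.mpr hpS)
  have e : (1 / 2 + σ * Complex.I) * (S : ℂ) = ((S / 2 : ℝ) : ℂ) + (σ * S : ℝ) * Complex.I := by
    push_cast; ring
  rw [e]
  refine h.trans ?_
  gcongr
  rw [Real.norm_eq_abs, abs_of_nonpos (by linarith)]
  linarith

lemma tendsto_primitive_ray (x c : ℂ) (hc : c ^ 3 = -1) {F : ℂ → ℂ}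
    (hF : ∀ t, HasDerivAt F (airyKernel x t) t) :
    Tendsto (fun S : ℝ => F (c * S) - F 0) atTop
      (𝓝 (c * ∫ s in Ioi (0 : ℝ), Complex.exp (-((s : ℂ) ^ 3 / 3) - x * c * s))) := by
  have hker : ∀ s : ℝ, Complex.exp (-((s : ℂ) ^ 3 / 3) - x * c * s) = airyKernel x (c * s) := by
    intro s
    rw [airyKernel, mul_pow, hc]
    ring_nf
  have hInt : IntegrableOn (fun s : ℝ => Complex.exp (-((s : ℂ) ^ 3 / 3) - x * c * s)) (Ioi 0) := by
    refine Integrable.mono' (integrableOn_exp_mul_sub_cube ‖x * c‖ (norm_nonneg _))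
      (by fun_prop) ((ae_restrict_mem measurableSet_Ioi).mono fun s hs => ?_)
    have hs0 : (0 : ℝ) < s := hs
    rw [Complex.norm_exp, ← Real.exp_add, Real.exp_le_exp, Complex.sub_re]
    have h1 : (-((s : ℂ) ^ 3 / 3)).re = -(s ^ 3 / 3) := by
      rw [show (-((s : ℂ) ^ 3 / 3)) = ((-(s ^ 3 / 3) : ℝ) : ℂ) by push_cast; ring,
        Complex.ofReal_re]
    have h2 : -(x * c * s).re ≤ ‖x * c‖ * s := by
      refine ((neg_le_abs _).trans (Complex.abs_re_le_norm _)).trans (le_of_eq ?_)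
      rw [norm_mul, Complex.norm_real, Real.norm_of_nonneg hs0.le]
    linarith
  have h := (intervalIntegral_tendsto_integral_Ioi 0 hInt tendsto_id).const_mul c
  refine h.congr fun S => ?_
  rw [← intervalIntegral.integral_const_mul]
  have hd : ∀ s ∈ uIcc 0 S, HasDerivAt (fun s : ℝ => F (c * s))
      (c * Complex.exp (-((s : ℂ) ^ 3 / 3) - x * c * s)) s := by
    intro s _
    have h1 : HasDerivAt (fun s : ℝ => c * (s : ℂ)) c s := by
      simpa using (Complex.ofRealCLM.hasDerivAt (x := s)).const_mul c
    have := (hF (c * s)).comp s h1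
    rw [hker, mul_comm]
    exact this
  have := intervalIntegral.integral_eq_sub_of_hasDerivAt hd
    (Continuous.intervalIntegrable (by fun_prop) _ _)
  simpa using this

lemma integral_airyKernel_vertical (x : ℂ) {p : ℝ} (hp : 0 < p) :
    ∫ v : ℝ, airyKernel x (p + v * Complex.I) = 2 * π * Ai x := by
  obtain ⟨F, hF'⟩ := (differentiable_airyKernel x).isExactOn_univ
  have hF : ∀ t, HasDerivAt F (airyKernel x t) t := fun t => hF' t (mem_univ t)
  set σ : ℝ := √3 / 2 with hσ
  have hσ0 : 0 < σ := by positivity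
  have hσ2 : σ ^ 2 = 3 / 4 := by rw [hσ, div_pow, Real.sq_sqrt (by norm_num)]; norm_num
  have hexp : Complex.exp (π / 3 * Complex.I) = 1 / 2 + σ * Complex.I := by
    rw [Complex.exp_mul_I, show (π : ℂ) / 3 = ((π / 3 : ℝ) : ℂ) by push_cast; ring,
      ← Complex.ofReal_cos, ← Complex.ofReal_sin, Real.cos_pi_div_three, Real.sin_pi_div_three]
    rw [hσ]; push_cast; ring
  have hexp' : Complex.exp (-(π / 3 * Complex.I)) = 1 / 2 + (-σ : ℝ) * Complex.I := by
    rw [← neg_mul, Complex.exp_mul_I, Complex.cos_neg, Complex.sin_neg,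
      show (π : ℂ) / 3 = ((π / 3 : ℝ) : ℂ) by push_cast; ring,
      ← Complex.ofReal_cos, ← Complex.ofReal_sin, Real.cos_pi_div_three, Real.sin_pi_div_three]
    rw [hσ]; push_cast; ring
  have hc3 : ∀ τ : ℝ, τ ^ 2 = 3 / 4 → (1 / 2 + (τ : ℂ) * Complex.I) ^ 3 = -1 := by
    intro τ hτ
    have hτc : (τ : ℂ) ^ 2 = 3 / 4 := by
      rw [← Complex.ofReal_pow, hτ]; push_cast; ring
    linear_combination (3 / 2 * τ ^ 2 + τ ^ 3 * Complex.I) * Complex.I_sq +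
      (-3 / 2 - τ * Complex.I) * hτc
  have hup := (tendsto_primitive_sub x hp hσ2 hF).add
    (tendsto_primitive_ray x _ (hc3 σ hσ2) hF)
  have hσ2' : (-σ) ^ 2 = 3 / 4 := by rw [neg_sq, hσ2]
  have hdown := (tendsto_primitive_sub x hp hσ2' hF).add
    (tendsto_primitive_ray x _ (hc3 (-σ) hσ2') hF)
  have hlim := hup.sub hdown
  rw [zero_add, zero_add, ← two_pi_I_mul_Ai_eq_rays x _ _ hexp.symm hexp'.symm] at hlim
  have hS : Tendsto (fun S : ℝ => σ * S) atTop atTop := tendsto_id.const_mul_atTop hσ0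
  have hvert := (intervalIntegral_tendsto_integral (integrable_airyKernel_vertical x hp)
    (tendsto_neg_atTop_atBot.comp hS) hS).const_mul Complex.I
  have huniq := tendsto_nhds_unique (hvert.congr fun S => ?_) hlim
  · have hI := Complex.I_ne_zero
    refine mul_left_cancel₀ hI ?_
    rw [huniq]; ring
  · rw [← intervalIntegral.integral_const_mul]
    have hd : ∀ v ∈ uIcc (-(σ * S)) (σ * S), HasDerivAt (fun v : ℝ => F (p + v * Complex.I))
        (Complex.I * airyKernel x (p + v * Complex.I)) v := by
      intro v _
      have h1 : HasDerivAt (fun v : ℝ => (p : ℂ) + (v : ℂ) * Complex.I) Complex.I v := by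
        simpa using ((Complex.ofRealCLM.hasDerivAt (x := v)).mul_const Complex.I).const_add (p : ℂ)
      have := (hF (p + v * Complex.I)).comp v h1
      rw [mul_comm]
      exact this
    have hcont := (differentiable_airyKernel x).continuous
    have := intervalIntegral.integral_eq_sub_of_hasDerivAt hd
      (Continuous.intervalIntegrable (by fun_prop) _ _)
    simp only [Function.comp_apply]
    rw [this]
    push_cast
    ring_nf

lemma Ai_sq_eq_integral {s : ℂ} (hs : 0 < s.re) :
    Ai (s ^ 2) = 1 / (2 * π) * Complex.exp (-(2 / 3 * s ^ 3)) *
      ∫ v : ℝ, Complex.exp (-s * (v : ℂ) ^ 2) * Complex.exp (-(v : ℂ) ^ 3 / 3 * Complex.I) := by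
  have h := integral_airyKernel_vertical (s ^ 2) hs
  rw [← integral_add_right_eq_self _ s.im] at h
  have hker : ∀ v : ℝ, airyKernel (s ^ 2) (s.re + ((v + s.im : ℝ) : ℂ) * Complex.I) =
      Complex.exp (-(2 / 3 * s ^ 3)) *
        (Complex.exp (-s * (v : ℂ) ^ 2) * Complex.exp (-(v : ℂ) ^ 3 / 3 * Complex.I)) := by
    intro v
    have e : (s.re : ℂ) + ((v + s.im : ℝ) : ℂ) * Complex.I = s + v * Complex.I := by
      conv_rhs => rw [← Complex.re_add_im s]
      push_cast; ring
    rw [e, airyKernel, ← Complex.exp_add, ← Complex.exp_add]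
    congr 1
    linear_combination (s * v ^ 2 + v ^ 3 * Complex.I / 3) * Complex.I_sq
  simp_rw [hker] at h
  rw [integral_const_mul] at h
  have hpi : (π : ℂ) ≠ 0 := by exact_mod_cast Real.pi_ne_zero
  rw [mul_assoc, h]
  field_simp

lemma pow_six_mul_exp_le {c : ℝ} (hc : 0 < c) (v : ℝ) :
    v ^ 6 * Real.exp (-c * v ^ 2) ≤ 48 / c ^ 3 * Real.exp (-(c / 2) * v ^ 2) := by
  have h := Real.pow_div_factorial_le_exp (x := c / 2 * v ^ 2) (by positivity) 3
  have h1 : v ^ 6 ≤ 48 / c ^ 3 * Real.exp (c / 2 * v ^ 2) := by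
    have : v ^ 6 = 48 / c ^ 3 * ((c / 2 * v ^ 2) ^ 3 / (Nat.factorial 3 : ℝ)) := by
      simp [Nat.factorial]; field_simp; ring
    rw [this]
    gcongr
  calc v ^ 6 * Real.exp (-c * v ^ 2)
      ≤ 48 / c ^ 3 * Real.exp (c / 2 * v ^ 2) * Real.exp (-c * v ^ 2) := by gcongr
    _ = 48 / c ^ 3 * Real.exp (-(c / 2) * v ^ 2) := by
      rw [mul_assoc, ← Real.exp_add]; ring_nf

lemma norm_airy_integral_sub_gaussian_le {s : ℂ} (hs : 0 < s.re) :
    ‖(∫ v : ℝ, Complex.exp (-s * (v : ℂ) ^ 2) * Complex.exp (-(v : ℂ) ^ 3 / 3 * Complex.I)) -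
      ∫ v : ℝ, Complex.exp (-s * (v : ℂ) ^ 2)‖ ≤ 8 / 3 / s.re ^ 3 * √(2 * π / s.re) := by
  have hG := integrable_cexp_neg_mul_sq hs
  have hnorm : ∀ v : ℝ, ‖Complex.exp (-s * (v : ℂ) ^ 2)‖ = Real.exp (-s.re * v ^ 2) := fun v => by
    rw [norm_cexp_neg_mul_sq]
  have hI : Integrable fun v : ℝ =>
      Complex.exp (-s * (v : ℂ) ^ 2) * Complex.exp (-(v : ℂ) ^ 3 / 3 * Complex.I) := by
    refine hG.mono (by fun_prop) (ae_of_all _ fun v => ?_)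
    rw [norm_mul, show -(v : ℂ) ^ 3 / 3 * Complex.I = ((-v ^ 3 / 3 : ℝ) : ℂ) * Complex.I by
      push_cast; ring, Complex.norm_exp_ofReal_mul_I, mul_one]
  set J := ∫ v : ℝ, Complex.exp (-s * (v : ℂ) ^ 2) * Complex.exp (-(v : ℂ) ^ 3 / 3 * Complex.I)
    with hJ
  have hJ' : J = ∫ v : ℝ,
      Complex.exp (-s * (v : ℂ) ^ 2) * Complex.exp ((v : ℂ) ^ 3 / 3 * Complex.I) := by
    rw [hJ, ← integral_neg_eq_self]
    refine integral_congr_ae (ae_of_all _ fun v => ?_)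
    simp only [Complex.ofReal_neg]
    ring_nf
  have hI' : Integrable fun v : ℝ =>
      Complex.exp (-s * (v : ℂ) ^ 2) * Complex.exp ((v : ℂ) ^ 3 / 3 * Complex.I) := by
    refine hI.comp_neg.congr (ae_of_all _ fun v => ?_)
    simp only [Complex.ofReal_neg]
    ring_nf
  have hsum : J - ∫ v : ℝ, Complex.exp (-s * (v : ℂ) ^ 2) = ∫ v : ℝ,
      Complex.exp (-s * (v : ℂ) ^ 2) * ((Real.cos (v ^ 3 / 3) - 1 : ℝ) : ℂ) := by
    have h2 : 2 * (J - ∫ v : ℝ, Complex.exp (-s * (v : ℂ) ^ 2)) = 2 * ∫ v : ℝ,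
        Complex.exp (-s * (v : ℂ) ^ 2) * ((Real.cos (v ^ 3 / 3) - 1 : ℝ) : ℂ) := by
      rw [← integral_const_mul, mul_sub, two_mul J]
      nth_rw 2 [hJ']
      rw [hJ, ← integral_add hI hI', ← integral_const_mul]
      refine (integral_sub (hI.add hI') (hG.const_mul 2)).symm.trans ?_
      refine integral_congr_ae (ae_of_all _ fun v => ?_)
      simp only [Pi.add_apply]
      push_cast
      rw [Complex.cos, show -(v : ℂ) ^ 3 / 3 = -((v : ℂ) ^ 3 / 3) by ring]
      ring
    exact mul_left_cancel₀ two_ne_zero h2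
  rw [hsum]
  have hb : ∀ v : ℝ, ‖Complex.exp (-s * (v : ℂ) ^ 2) * ((Real.cos (v ^ 3 / 3) - 1 : ℝ) : ℂ)‖ ≤
      8 / 3 / s.re ^ 3 * Real.exp (-(s.re / 2) * v ^ 2) := by
    intro v
    have h1 : |Real.cos (v ^ 3 / 3) - 1| ≤ v ^ 6 / 18 := by
      rw [abs_le]
      have h2 := Real.one_sub_sq_div_two_le_cos (x := v ^ 3 / 3)
      have h3 := Real.cos_le_one (v ^ 3 / 3)
      constructor
      · nlinarith
      · have : 0 ≤ v ^ 6 := by positivity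
        linarith
    rw [norm_mul, hnorm, Complex.norm_real, Real.norm_eq_abs]
    calc Real.exp (-s.re * v ^ 2) * |Real.cos (v ^ 3 / 3) - 1|
        ≤ Real.exp (-s.re * v ^ 2) * (v ^ 6 / 18) := by gcongr
      _ = 1 / 18 * (v ^ 6 * Real.exp (-s.re * v ^ 2)) := by ring
      _ ≤ 1 / 18 * (48 / s.re ^ 3 * Real.exp (-(s.re / 2) * v ^ 2)) := by
          exact mul_le_mul_of_nonneg_left (pow_six_mul_exp_le hs v) (by norm_num)
      _ = _ := by ring
  refine (norm_integral_le_of_norm_le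
    ((integrable_exp_neg_mul_sq (by positivity)).const_mul _) (ae_of_all _ hb)).trans (le_of_eq ?_)
  rw [integral_const_mul, integral_gaussian]
  congr 2
  field_simp

lemma cpow_half_sq (w : ℂ) : (w ^ (1 / 2 : ℂ)) ^ 2 = w := by
  rw [← Complex.cpow_nat_mul]; simp

lemma ofReal_mul_cpow_half {a : ℝ} (ha : 0 < a) {w : ℂ} (hw : w ≠ 0) :
    ((a : ℂ) * w) ^ (1 / 2 : ℂ) = (√a : ℝ) * w ^ (1 / 2 : ℂ) := by
  have ha' : (a : ℂ) ≠ 0 := by exact_mod_cast ha.ne'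
  rw [Complex.cpow_def_of_ne_zero (mul_ne_zero ha' hw), Complex.cpow_def_of_ne_zero hw,
    Complex.log_ofReal_mul ha hw, add_mul, Complex.exp_add, Real.sqrt_eq_rpow,
    Real.rpow_def_of_pos ha]
  push_cast
  rfl

/-- Leading-order asymptotics of `Ai` away from the negative real axis. -/
lemma Ai_sq_asymptotics {s : ℂ} (hs0 : s ≠ 0) (hs : ‖s‖ / 4 ≤ s.re) :
    ∃ e : ℂ, ‖e‖ ≤ 600 / ‖s‖ ^ 3 ∧ Ai (s ^ 2) =
      ((1 / (2 * √π) : ℝ) : ℂ) * Complex.exp (-(2 / 3 * s ^ 3)) * s⁻¹ ^ (1 / 2 : ℂ) * (1 + e) := by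
  have hn : 0 < ‖s‖ := norm_pos_iff.mpr hs0
  have hre : 0 < s.re := by linarith
  have hpi : 0 < √π := Real.sqrt_pos.mpr Real.pi_pos
  set J := ∫ v : ℝ, Complex.exp (-s * (v : ℂ) ^ 2) * Complex.exp (-(v : ℂ) ^ 3 / 3 * Complex.I)
    with hJ
  set G : ℂ := (√π : ℝ) * s⁻¹ ^ (1 / 2 : ℂ) with hG
  have hgauss : ∫ v : ℝ, Complex.exp (-s * (v : ℂ) ^ 2) = G := by
    rw [integral_gaussian_complex hre, div_eq_mul_inv,
      ofReal_mul_cpow_half Real.pi_pos (inv_ne_zero hs0)]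
  have hGn : ‖G‖ = √(π / ‖s‖) := by
    have h1 : ‖G‖ ^ 2 = π / ‖s‖ := by
      rw [← norm_pow, hG, mul_pow, cpow_half_sq, ← Complex.ofReal_pow,
        Real.sq_sqrt Real.pi_pos.le, norm_mul, Complex.norm_real, norm_inv,
        Real.norm_of_nonneg Real.pi_pos.le, div_eq_mul_inv]
    rw [← h1, Real.sqrt_sq (norm_nonneg _)]
  have hG0 : G ≠ 0 := by
    rw [← norm_pos_iff, hGn]; positivity
  have hle := norm_airy_integral_sub_gaussian_le hre
  rw [hgauss, ← hJ] at hle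
  refine ⟨(J - G) / G, ?_, ?_⟩
  · rw [norm_div, div_le_iff₀ (norm_pos_iff.mpr hG0), hGn]
    refine hle.trans ?_
    have h1 : 8 / 3 / s.re ^ 3 ≤ 8 / 3 / (‖s‖ / 4) ^ 3 := by gcongr
    have h2 : √(2 * π / s.re) ≤ 3 * √(π / ‖s‖) := by
      rw [show (3 : ℝ) = √9 by rw [show (9 : ℝ) = 3 ^ 2 by norm_num, Real.sqrt_sq (by norm_num)],
        ← Real.sqrt_mul (by norm_num)]
      apply Real.sqrt_le_sqrt
      rw [← mul_div_assoc, div_le_div_iff₀ hre hn]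
      nlinarith [Real.pi_pos]
    calc 8 / 3 / s.re ^ 3 * √(2 * π / s.re)
        ≤ 8 / 3 / (‖s‖ / 4) ^ 3 * (3 * √(π / ‖s‖)) := by gcongr
      _ = 512 / ‖s‖ ^ 3 * √(π / ‖s‖) := by field_simp; norm_num
      _ ≤ 600 / ‖s‖ ^ 3 * √(π / ‖s‖) := by gcongr; norm_num
  · rw [Ai_sq_eq_integral hre, ← hJ]
    have h1 : s⁻¹ ^ (1 / 2 : ℂ) * (1 + (J - G) / G) = J / (√π : ℝ) := by
      have hpi' : ((√π : ℝ) : ℂ) ≠ 0 := by exact_mod_cast hpi.ne'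
      have h2 : s⁻¹ ^ (1 / 2 : ℂ) = G / (√π : ℝ) := by rw [hG]; field_simp
      rw [h2]; field_simp; ring
    rw [mul_assoc _ (s⁻¹ ^ (1 / 2 : ℂ)), h1]
    have h3 : ((√π : ℝ) : ℂ) * (√π : ℝ) = π := by
      rw [← Complex.ofReal_mul, Real.mul_self_sqrt Real.pi_pos.le]
    have hpi' : ((√π : ℝ) : ℂ) ≠ 0 := by exact_mod_cast hpi.ne'
    push_cast
    rw [← h3]
    field_simp

lemma ωc_pow_three : ωc ^ 3 = 1 := by
  rw [ωc, ← Complex.exp_nat_mul, ← Complex.exp_two_pi_mul_I]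
  congr 1
  push_cast
  ring

lemma one_add_ωc_add_sq : 1 + ωc + ωc ^ 2 = 0 := by
  have h1 : ωc ≠ 1 := by
    intro h
    have h2 := congrArg Complex.im h
    rw [ωc, show 2 * (π : ℂ) * Complex.I / 3 = ((2 * π / 3 : ℝ) : ℂ) * Complex.I by
      push_cast; ring, Complex.exp_ofReal_mul_I_im, Complex.one_im,
      show 2 * π / 3 = π - π / 3 by ring, Real.sin_pi_sub, Real.sin_pi_div_three] at h2
    have : 0 < √3 := by positivity
    linarith
  refine mul_left_cancel₀ (sub_ne_zero.mpr h1) ?_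
  linear_combination ωc_pow_three

lemma airyCoeff_mul_one_add (k : ℕ) :
    airyCoeff k * (1 + ωc ^ (k + 1) + ωc ^ (2 * (k + 1))) = 0 := by
  induction k using Nat.strong_induction_on with
  | _ k ih =>
  match k with
  | 0 => linear_combination airyCoeff 0 * one_add_ωc_add_sq
  | 1 => linear_combination airyCoeff 1 * (one_add_ωc_add_sq + ωc * ωc_pow_three)
  | 2 => rw [airyCoeff, zero_mul]
  | (j + 3) =>
    have h := ih j (by omega)
    have e1 : ωc ^ (j + 3 + 1) = ωc ^ (j + 1) := by
      rw [show j + 3 + 1 = (j + 1) + 3 by ring, pow_add, ωc_pow_three, mul_one]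
    have e2 : ωc ^ (2 * (j + 3 + 1)) = ωc ^ (2 * (j + 1)) := by
      rw [mul_comm, pow_mul, e1, ← pow_mul, mul_comm]
    rw [airyCoeff, e1, e2, div_mul_eq_mul_div, h, zero_div]

/-- The connection formula between the three rotated Airy functions. -/
lemma Ai_connection (x : ℂ) : Ai x + ωc * Ai (ωc * x) + ωc ^ 2 * Ai (ωc ^ 2 * x) = 0 := by
  have h := ((hasSum_Ai x).add ((hasSum_Ai (ωc * x)).mul_left ωc)).add
    ((hasSum_Ai (ωc ^ 2 * x)).mul_left (ωc ^ 2))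
  refine h.unique (hasSum_zero.congr_fun fun k => ?_)
  linear_combination x ^ k * airyCoeff_mul_one_add k

lemma rotation_mul_inv_cpow_half {v : ℂ} (hv : 0 < v.re) {φ : ℝ} (hφ : |φ| ≤ π / 2) :
    (Complex.exp (φ * Complex.I) * v)⁻¹ ^ (1 / 2 : ℂ) =
      Complex.exp (-(φ / 2 * Complex.I)) * v⁻¹ ^ (1 / 2 : ℂ) := by
  have hv0 : v ≠ 0 := by rintro rfl; simp at hv
  have hre : 0 < (v⁻¹).re := by
    rw [Complex.inv_re]
    exact div_pos hv (Complex.normSq_pos.mpr hv0)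
  have harg : |(v⁻¹).arg| < π / 2 := Complex.abs_arg_lt_pi_div_two_iff.mpr (Or.inl hre)
  rw [abs_lt] at harg
  rw [abs_le] at hφ
  have hpi := Real.pi_pos
  have e1 : (Complex.exp (φ * Complex.I))⁻¹ = Complex.exp ((-φ : ℝ) * Complex.I) := by
    rw [← Complex.exp_neg]; push_cast; ring_nf
  have hargexp : (Complex.exp ((-φ : ℝ) * Complex.I)).arg = -φ := by
    rw [Complex.arg_exp_mul_I, toIocMod_eq_self]
    constructor <;> linarith
  rw [mul_inv, e1, Complex.cpow_def_of_ne_zero (mul_ne_zero (Complex.exp_ne_zero _)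
      (inv_ne_zero hv0)), Complex.log_mul (Complex.exp_ne_zero _) (inv_ne_zero hv0),
    Complex.cpow_def_of_ne_zero (inv_ne_zero hv0), ← Complex.exp_add, Complex.log_exp]
  · congr 1
    push_cast
    ring
  · simp; linarith
  · simp; linarith
  · rw [hargexp]
    constructor <;> linarith

/-- Airy asymptotics in the rotated variable `e^{iφ} v`, with the root taken of `v⁻¹`. -/
lemma Ai_rotated_sq {v : ℂ} (hv : 0 < v.re) {φ : ℝ} (hφ : |φ| ≤ π / 2)
    (hs : ‖v‖ / 4 ≤ (Complex.exp (φ * Complex.I) * v).re) :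
    ∃ e, ‖e‖ ≤ 600 / ‖v‖ ^ 3 ∧ Ai ((Complex.exp (φ * Complex.I) * v) ^ 2) =
      ((1 / (2 * √π) : ℝ) : ℂ) * Complex.exp (-(2 / 3 * (Complex.exp (φ * Complex.I) * v) ^ 3)) *
        (Complex.exp (-(φ / 2 * Complex.I)) * v⁻¹ ^ (1 / 2 : ℂ)) * (1 + e) := by
  have hv0 : v ≠ 0 := by rintro rfl; simp at hv
  have hn : ‖Complex.exp (φ * Complex.I) * v‖ = ‖v‖ := by
    rw [norm_mul, Complex.norm_exp_ofReal_mul_I, one_mul]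
  have h := Ai_sq_asymptotics (s := Complex.exp (φ * Complex.I) * v)
    (mul_ne_zero (Complex.exp_ne_zero _) hv0) (by rwa [hn])
  rwa [hn, rotation_mul_inv_cpow_half hv hφ] at h

/-- The primitive 24th root of unity `e^{iπ/12}`. -/
noncomputable def ζc : ℂ := Complex.exp (π / 12 * Complex.I)

lemma ζc_ne_zero : ζc ≠ 0 := Complex.exp_ne_zero _

lemma norm_ζc : ‖ζc‖ = 1 := by
  rw [ζc, show (π : ℂ) / 12 * Complex.I = ((π / 12 : ℝ) : ℂ) * Complex.I by push_cast; ring,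
    Complex.norm_exp_ofReal_mul_I]

lemma ζc_pow_six : ζc ^ 6 = Complex.I := by
  rw [ζc, ← Complex.exp_nat_mul]
  refine Eq.trans ?_ Complex.exp_pi_div_two_mul_I
  congr 1
  push_cast
  ring

lemma ζc_pow_twelve : ζc ^ 12 = -1 := by
  rw [show ζc ^ 12 = (ζc ^ 6) ^ 2 by ring, ζc_pow_six, Complex.I_sq]

lemma ωc_eq_ζc_pow : ωc = ζc ^ 8 := by
  rw [ωc, ζc, ← Complex.exp_nat_mul]
  congr 1
  push_cast
  ring

lemma Wf_eq (f : ℝ) : Wf f = ((f ^ ((1 : ℝ) / 3) : ℝ) : ℂ) * (ζc ^ 2)⁻¹ / (2 * π) := by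
  rw [Wf, ζc, ← Complex.exp_nat_mul, ← Complex.exp_neg]
  congr 3
  push_cast
  ring

/-- The growing and the decaying WKB solutions describing `Ai (ω x)` and `Ai x` at `x = -v ^ 2`,
in one of the two sectors of validity. -/
lemma Ai_wkb_pair {v a b : ℂ} (hv : 0 < v.re)
    (hR : ‖v‖ / 4 ≤ (Complex.exp ((π / 6 : ℝ) * Complex.I) * v).re)
    (hX : (a = 0 ∧ b = -ωc ^ 2 ∧ ‖v‖ / 4 ≤ (Complex.exp ((-(π / 6) : ℝ) * Complex.I) * v).re) ∨
      (a = -ωc ∧ b = 0 ∧ ‖v‖ / 4 ≤ (Complex.exp ((π / 2 : ℝ) * Complex.I) * v).re)) :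
    ∃ X R x ρ : ℂ, ‖x‖ ≤ 600 / ‖v‖ ^ 3 ∧ ‖ρ‖ ≤ 600 / ‖v‖ ^ 3 ∧
      X = ((1 / (2 * √π) : ℝ) : ℂ) * Complex.exp (2 / 3 * Complex.I * v ^ 3) * ζc *
        v⁻¹ ^ (1 / 2 : ℂ) * (1 + x) ∧
      R = ((1 / (2 * √π) : ℝ) : ℂ) * Complex.exp (-(2 / 3 * Complex.I * v ^ 3)) * ζc⁻¹ *
        v⁻¹ ^ (1 / 2 : ℂ) * (1 + ρ) ∧
      Ai (-ωc * v ^ 2) = X + a * R ∧ Ai (-v ^ 2) = -ωc * X + b * R := by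
  have hpi := Real.pi_pos
  have hrot (n : ℕ) (t : ℝ) (ht : t = n * (π / 12)) : Complex.exp (t * Complex.I) = ζc ^ n := by
    rw [ζc, ← Complex.exp_nat_mul, ht]
    congr 1
    push_cast
    ring
  have hrotneg (n : ℕ) (t : ℝ) (ht : t = -(n * (π / 12))) :
      Complex.exp (t * Complex.I) = (ζc ^ n)⁻¹ := by
    rw [ζc, ← Complex.exp_nat_mul, ← Complex.exp_neg, ht]
    congr 1
    push_cast
    ring
  have hz := ζc_ne_zero
  have h12 := ζc_pow_twelve
  obtain ⟨ρ, hρ, hAρ⟩ := Ai_rotated_sq hv (φ := π / 6) (by rw [abs_of_pos] <;> linarith) hR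
  have e1 : Complex.exp (-(((π / 6 : ℝ) : ℂ) / 2 * Complex.I)) = ζc⁻¹ := by
    rw [ζc, ← Complex.exp_neg]; congr 1; push_cast; ring
  rw [hrot 2 _ (by push_cast; ring), e1, show (ζc ^ 2 * v) ^ 3 = ζc ^ 6 * v ^ 3 by ring,
    ζc_pow_six, show (ζc ^ 2 * v) ^ 2 = ωc ^ 2 * (-v ^ 2) by
      rw [ωc_eq_ζc_pow]; linear_combination ζc ^ 4 * v ^ 2 * h12,
    show -(2 / 3 * (Complex.I * v ^ 3)) = -(2 / 3 * Complex.I * v ^ 3) by ring] at hAρ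
  have hconn := Ai_connection (-v ^ 2)
  rw [show ωc * -v ^ 2 = -ωc * v ^ 2 by ring, hAρ] at hconn
  rcases hX with ⟨rfl, rfl, hX⟩ | ⟨rfl, rfl, hX⟩
  · obtain ⟨x, hx, hAx⟩ := Ai_rotated_sq hv (φ := -(π / 6))
      (by rw [abs_neg, abs_of_pos] <;> linarith) hX
    have e2 : Complex.exp (-(((-(π / 6) : ℝ) : ℂ) / 2 * Complex.I)) = ζc := by
      rw [ζc]; congr 1; push_cast; ring
    have e3 : (ζc ^ 2)⁻¹ = -ζc ^ 10 := by
      field_simp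
      linear_combination h12
    rw [hrotneg 2 _ (by push_cast; ring), e2, e3,
      show (-ζc ^ 10 * v) ^ 3 = -(ζc ^ 6 * (ζc ^ 12) ^ 2 * v ^ 3) by ring, h12, ζc_pow_six,
      show (-ζc ^ 10 * v) ^ 2 = -ωc * v ^ 2 by
        rw [ωc_eq_ζc_pow]; linear_combination ζc ^ 8 * v ^ 2 * h12,
      show -(2 / 3 * -(Complex.I * (-1) ^ 2 * v ^ 3)) = 2 / 3 * Complex.I * v ^ 3 by ring] at hAx
    rw [hAx] at hconn
    refine ⟨_, _, x, ρ, hx, hρ, rfl, rfl, ?_, ?_⟩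
    · rw [hAx]; ring
    · linear_combination hconn
  · obtain ⟨x, hx, hAx⟩ := Ai_rotated_sq hv (φ := π / 2)
      (by rw [abs_of_pos]; linarith) hX
    have e2 : Complex.exp (-(((π / 2 : ℝ) : ℂ) / 2 * Complex.I)) = (ζc ^ 3)⁻¹ := by
      rw [ζc, ← Complex.exp_nat_mul, ← Complex.exp_neg]; congr 1; push_cast; ring
    have e3 : (ζc ^ 3)⁻¹ = -ζc ^ 9 := by
      field_simp
      linear_combination h12
    rw [hrot 6 _ (by push_cast; ring), e2, e3, ζc_pow_six,
      show (Complex.I * v) ^ 3 = -(Complex.I * v ^ 3) by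
        linear_combination Complex.I * v ^ 3 * Complex.I_sq,
      show (Complex.I * v) ^ 2 = -v ^ 2 by linear_combination v ^ 2 * Complex.I_sq,
      show -(2 / 3 * -(Complex.I * v ^ 3)) = 2 / 3 * Complex.I * v ^ 3 by ring] at hAx
    have e4 : Ai (-v ^ 2) = -ωc * (((1 / (2 * √π) : ℝ) : ℂ) *
        Complex.exp (2 / 3 * Complex.I * v ^ 3) * ζc * v⁻¹ ^ (1 / 2 : ℂ) * (1 + x)) := by
      rw [hAx, ωc_eq_ζc_pow]; ring
    rw [e4] at hconn
    refine ⟨_, _, x, ρ, hx, hρ, rfl, rfl, ?_, ?_⟩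
    · have h3 := ωc_pow_three
      linear_combination (ωc ^ 2) * hconn - (Ai (-ωc * v ^ 2) - (((1 / (2 * √π) : ℝ) : ℂ) *
        Complex.exp (2 / 3 * Complex.I * v ^ 3) * ζc * v⁻¹ ^ (1 / 2 : ℂ) * (1 + x)) + ωc *
        (((1 / (2 * √π) : ℝ) : ℂ) * Complex.exp (-(2 / 3 * Complex.I * v ^ 3)) * ζc⁻¹ *
        v⁻¹ ^ (1 / 2 : ℂ) * (1 + ρ))) * h3
    · rw [e4]; ring

lemma Ai_wkb_products {f : ℝ} (hf : 0 < f) {q a b : ℂ} (hq : 0 < q.re)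
    (hR : ‖q‖ / 4 ≤ (Complex.exp ((π / 6 : ℝ) * Complex.I) * q).re)
    (hX : (a = 0 ∧ b = -ωc ^ 2 ∧ ‖q‖ / 4 ≤ (Complex.exp ((-(π / 6) : ℝ) * Complex.I) * q).re) ∨
      (a = -ωc ∧ b = 0 ∧ ‖q‖ / 4 ≤ (Complex.exp ((π / 2 : ℝ) * Complex.I) * q).re)) :
    ∃ X R x ρ : ℂ, ‖x‖ ≤ 600 * f / ‖q‖ ^ 3 ∧ ‖ρ‖ ≤ 600 * f / ‖q‖ ^ 3 ∧
      X * R * (Wf f)⁻¹ = ζc ^ 2 * ((1 + x) * (1 + ρ)) / (2 * q) ∧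
      X ^ 2 * (Wf f)⁻¹ =
        ζc ^ 4 * (Complex.exp (4 / 3 * Complex.I * q ^ 3 / f) * (1 + x) ^ 2) / (2 * q) ∧
      R ^ 2 * (Wf f)⁻¹ =
        Complex.exp (-(4 / 3 * Complex.I * q ^ 3 / f)) * (1 + ρ) ^ 2 / (2 * q) ∧
      Ai (-ωc * q ^ 2 * ((f ^ (-(2 : ℝ) / 3) : ℝ) : ℂ)) = X + a * R ∧
      Ai (-q ^ 2 * ((f ^ (-(2 : ℝ) / 3) : ℝ) : ℂ)) = -ωc * X + b * R := by
  have hq0 : q ≠ 0 := by rintro rfl; simp at hq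
  set h : ℝ := f ^ ((1 : ℝ) / 3) with hh
  have hpos : 0 < h := Real.rpow_pos_of_pos hf _
  have hc : (h : ℂ) ≠ 0 := by exact_mod_cast hpos.ne'
  have hcube : h ^ 3 = f := by
    rw [hh, ← Real.rpow_natCast, ← Real.rpow_mul hf.le]; norm_num
  have hcubeC : (h : ℂ) ^ 3 = f := by exact_mod_cast hcube
  have hsq : f ^ (-(2 : ℝ) / 3) = (h ^ 2)⁻¹ := by
    rw [hh, ← Real.rpow_natCast, ← Real.rpow_mul hf.le, ← Real.rpow_neg hf.le]; norm_num
  have hmul (c : ℂ) : c * (q / h) = ((h⁻¹ : ℝ) : ℂ) * (c * q) := by push_cast; field_simp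
  have hn : ‖q / h‖ = h⁻¹ * ‖q‖ := by
    rw [norm_div, Complex.norm_real, Real.norm_eq_abs, abs_of_pos hpos]; ring
  have hcone (c : ℂ) (hc : ‖q‖ / 4 ≤ (c * q).re) : ‖q / h‖ / 4 ≤ (c * (q / h)).re := by
    rw [hmul, Complex.re_ofReal_mul, hn, mul_div_assoc]
    exact mul_le_mul_of_nonneg_left hc (by positivity)
  have hre : 0 < (q / h).re := by
    rw [← one_mul (q / h), hmul, Complex.re_ofReal_mul, one_mul]; positivity
  obtain ⟨X, R, x, ρ, hx, hρ, hXe, hRe, hA, hB⟩ := Ai_wkb_pair hre (hcone _ hR)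
    (hX.imp (fun H => ⟨H.1, H.2.1, hcone _ H.2.2⟩) (fun H => ⟨H.1, H.2.1, hcone _ H.2.2⟩))
  have hbound : 600 / ‖q / h‖ ^ 3 = 600 * f / ‖q‖ ^ 3 := by
    rw [hn, ← hcube]
    have : ‖q‖ ≠ 0 := norm_ne_zero_iff.mpr hq0
    field_simp
  have hK : ((1 / (2 * √π) : ℝ) : ℂ) ^ 2 = 1 / (4 * π) := by
    have : (1 / (2 * √π) : ℝ) ^ 2 = 1 / (4 * π) := by
      rw [div_pow, mul_pow, Real.sq_sqrt Real.pi_pos.le]; norm_num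
    exact_mod_cast congrArg ((↑) : ℝ → ℂ) this
  have hN : ((q / h)⁻¹ ^ (1 / 2 : ℂ)) ^ 2 = h / q := by
    rw [cpow_half_sq, inv_div]
  have hpi : (π : ℂ) ≠ 0 := by exact_mod_cast Real.pi_ne_zero
  have hz := ζc_ne_zero
  have hJ : (Wf f)⁻¹ = 2 * π * ζc ^ 2 / h := by
    rw [Wf_eq, ← hh]
    field_simp
  have hE : 2 / 3 * Complex.I * (q / h) ^ 3 + 2 / 3 * Complex.I * (q / h) ^ 3 =
      4 / 3 * Complex.I * q ^ 3 / f := by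
    rw [← hcubeC, div_pow]; ring
  have hE1 := hE ▸ Complex.exp_add (2 / 3 * Complex.I * (q / h) ^ 3) (2 / 3 * Complex.I * (q / h) ^ 3)
  have hE2 : Complex.exp (-(4 / 3 * Complex.I * q ^ 3 / f)) =
      Complex.exp (-(2 / 3 * Complex.I * (q / h) ^ 3)) ^ 2 := by
    rw [← hE, neg_add, Complex.exp_add, sq]
  have hE3 : Complex.exp (2 / 3 * Complex.I * (q / h) ^ 3) *
      Complex.exp (-(2 / 3 * Complex.I * (q / h) ^ 3)) = 1 := by
    rw [← Complex.exp_add, add_neg_cancel, Complex.exp_zero]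
  rw [hbound] at hx hρ
  refine ⟨X, R, x, ρ, hx, hρ, ?_, ?_, ?_, ?_, ?_⟩
  · calc X * R * (Wf f)⁻¹ = ((1 / (2 * √π) : ℝ) : ℂ) ^ 2 * ((q / h)⁻¹ ^ (1 / 2 : ℂ)) ^ 2 *
        (Complex.exp (2 / 3 * Complex.I * (q / h) ^ 3) *
          Complex.exp (-(2 / 3 * Complex.I * (q / h) ^ 3))) * (ζc * ζc⁻¹) *
          ((1 + x) * (1 + ρ)) * (Wf f)⁻¹ := by rw [hXe, hRe]; ring
      _ = _ := by rw [hK, hN, hE3, hJ]; field_simp; ring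
  · calc X ^ 2 * (Wf f)⁻¹ = ((1 / (2 * √π) : ℝ) : ℂ) ^ 2 * ((q / h)⁻¹ ^ (1 / 2 : ℂ)) ^ 2 *
        (Complex.exp (2 / 3 * Complex.I * (q / h) ^ 3) *
          Complex.exp (2 / 3 * Complex.I * (q / h) ^ 3)) * ζc ^ 2 *
          (1 + x) ^ 2 * (Wf f)⁻¹ := by rw [hXe]; ring
      _ = _ := by rw [hK, hN, ← hE1, hJ]; field_simp; ring
  · calc R ^ 2 * (Wf f)⁻¹ = ((1 / (2 * √π) : ℝ) : ℂ) ^ 2 * ((q / h)⁻¹ ^ (1 / 2 : ℂ)) ^ 2 *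
        Complex.exp (-(2 / 3 * Complex.I * (q / h) ^ 3)) ^ 2 * (ζc ^ 2)⁻¹ *
          (1 + ρ) ^ 2 * (Wf f)⁻¹ := by rw [hRe]; ring
      _ = _ := by rw [hK, hN, ← hE2, hJ]; field_simp; ring
  · rw [← hA, hsq]; congr 1; push_cast; ring
  · rw [← hB, hsq]; congr 1; push_cast; ring

lemma norm_one_add_le_two {x : ℂ} {c : ℝ} (hx : ‖x‖ ≤ c) (hc : c ≤ 1) : ‖1 + x‖ ≤ 2 := by
  calc ‖1 + x‖ ≤ ‖(1 : ℂ)‖ + ‖x‖ := norm_add_le _ _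
    _ ≤ 2 := by rw [norm_one]; linarith

lemma norm_ωc : ‖ωc‖ = 1 := by rw [ωc_eq_ζc_pow, norm_pow, norm_ζc, one_pow]

/-- `D_f` in terms of WKB solutions: two dominant exponentials plus a controlled remainder. -/
lemma exists_Df_sub_wkb_le {κ η f : ℝ} (hη : 0 < η) (hf : 0 < f) {z p m T : ℂ}
    (hp : p ^ 2 = z + κ * f) (hm : m ^ 2 = z - κ * f) (hpre : 0 < p.re) (hmre : 0 < m.re)
    (hRp : ‖p‖ / 4 ≤ (Complex.exp ((π / 6 : ℝ) * Complex.I) * p).re)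
    (hRm : ‖m‖ / 4 ≤ (Complex.exp ((π / 6 : ℝ) * Complex.I) * m).re)
    (hpn : 600 * f ≤ ‖p‖ ^ 3) (hmn : 600 * f ≤ ‖m‖ ^ 3)
    (hX : (‖p‖ / 4 ≤ (Complex.exp ((-(π / 6) : ℝ) * Complex.I) * p).re ∧
        ‖m‖ / 4 ≤ (Complex.exp ((-(π / 6) : ℝ) * Complex.I) * m).re ∧
        T = 4 / 3 * Complex.I * p ^ 3 / f - 4 / 3 * Complex.I * m ^ 3 / f) ∨
      (‖p‖ / 4 ≤ (Complex.exp ((π / 2 : ℝ) * Complex.I) * p).re ∧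
        ‖m‖ / 4 ≤ (Complex.exp ((π / 2 : ℝ) * Complex.I) * m).re ∧
        T = 4 / 3 * Complex.I * m ^ 3 / f - 4 / 3 * Complex.I * p ^ 3 / f)) :
    ∃ xp xm ρp ρm : ℂ, ‖xp‖ ≤ 600 * f / ‖p‖ ^ 3 ∧ ‖xm‖ ≤ 600 * f / ‖m‖ ^ 3 ∧
      ‖ρp‖ ≤ 600 * f / ‖p‖ ^ 3 ∧ ‖ρm‖ ≤ 600 * f / ‖m‖ ^ 3 ∧
      ‖Df κ η f z - (Complex.exp (4 / 3 * Complex.I * m ^ 3 / f) *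
          (1 / (2 * η * m) * (1 + xm) ^ 2 +
            Complex.I / (4 * η ^ 2 * p * m) * ((1 + xp) * (1 + xm) ^ 2 * (1 + ρp))) +
        Complex.exp (4 / 3 * Complex.I * p ^ 3 / f) *
          (1 / (2 * η * p) * (1 + xp) ^ 2 -
            Complex.I / (4 * η ^ 2 * p * m) * ((1 + xp) ^ 2 * (1 + xm) * (1 + ρm))))‖ ≤
        1 + 2 / η * (1 / ‖p‖ + 1 / ‖m‖) + 4 / (η ^ 2 * (‖p‖ * ‖m‖)) * (1 + ‖Complex.exp T‖) := by
  have hp0 : p ≠ 0 := by rintro rfl; simp at hpre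
  have hm0 : m ≠ 0 := by rintro rfl; simp at hmre
  have hpN : 0 < ‖p‖ := norm_pos_iff.mpr hp0
  have hmN : 0 < ‖m‖ := norm_pos_iff.mpr hm0
  have hηc : (η : ℂ) ≠ 0 := by exact_mod_cast hη.ne'
  have hbp : 600 * f / ‖p‖ ^ 3 ≤ 1 := (div_le_one (by positivity)).mpr hpn
  have hbm : 600 * f / ‖m‖ ^ 3 ≤ 1 := (div_le_one (by positivity)).mpr hmn
  have h3 := ωc_pow_three
  have h12 := ζc_pow_twelve
  have hω4 : -ωc * ζc ^ 4 = 1 := by rw [ωc_eq_ζc_pow]; linear_combination -h12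
  set Gp := Complex.exp (4 / 3 * Complex.I * p ^ 3 / f) with hGp
  set Gm := Complex.exp (4 / 3 * Complex.I * m ^ 3 / f) with hGm
  have hDf : Df κ η f z = 1 + (Ai (-ωc * m ^ 2 * ((f ^ (-(2 : ℝ) / 3) : ℝ) : ℂ)) *
      Ai (-m ^ 2 * ((f ^ (-(2 : ℝ) / 3) : ℝ) : ℂ)) +
      Ai (-ωc * p ^ 2 * ((f ^ (-(2 : ℝ) / 3) : ℝ) : ℂ)) *
      Ai (-p ^ 2 * ((f ^ (-(2 : ℝ) / 3) : ℝ) : ℂ))) * (Wf f)⁻¹ / η +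
      Ai (-ωc * p ^ 2 * ((f ^ (-(2 : ℝ) / 3) : ℝ) : ℂ)) *
        Ai (-m ^ 2 * ((f ^ (-(2 : ℝ) / 3) : ℝ) : ℂ)) *
      (Ai (-ωc * m ^ 2 * ((f ^ (-(2 : ℝ) / 3) : ℝ) : ℂ)) *
        Ai (-p ^ 2 * ((f ^ (-(2 : ℝ) / 3) : ℝ) : ℂ)) -
        Ai (-ωc * p ^ 2 * ((f ^ (-(2 : ℝ) / 3) : ℝ) : ℂ)) *
        Ai (-m ^ 2 * ((f ^ (-(2 : ℝ) / 3) : ℝ) : ℂ))) * (Wf f)⁻¹ ^ 2 / η ^ 2 := by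
    rw [Df, alphaP, alphaM, betaP, betaM, hp, hm]
    field_simp
  have key : ∃ xp xm ρp ρm c t : ℂ, ‖xp‖ ≤ 600 * f / ‖p‖ ^ 3 ∧ ‖xm‖ ≤ 600 * f / ‖m‖ ^ 3 ∧
      ‖ρp‖ ≤ 600 * f / ‖p‖ ^ 3 ∧ ‖ρm‖ ≤ 600 * f / ‖m‖ ^ 3 ∧ ‖c‖ = 1 ∧ ‖t‖ ≤ 16 ∧
      Df κ η f z = (Gm * (1 / (2 * η * m) * (1 + xm) ^ 2 +
            Complex.I / (4 * η ^ 2 * p * m) * ((1 + xp) * (1 + xm) ^ 2 * (1 + ρp))) +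
        Gp * (1 / (2 * η * p) * (1 + xp) ^ 2 -
            Complex.I / (4 * η ^ 2 * p * m) * ((1 + xp) ^ 2 * (1 + xm) * (1 + ρm)))) +
        (1 + c * ζc ^ 2 / (2 * η) * ((1 + xp) * (1 + ρp) * (1 / p) + (1 + xm) * (1 + ρm) * (1 / m))
        + ωc * ζc ^ 4 / (4 * (η ^ 2 * (p * m))) *
          ((1 + xp) * (1 + ρp) * ((1 + xm) * (1 + ρm)) - t * Complex.exp T)) := by
    rcases hX with ⟨hXp, hXm, hT⟩ | ⟨hXp, hXm, hT⟩
    · obtain ⟨X, R, x, ρ, hx, hρ, hXR, hXX, hRR, hA, hB⟩ :=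
        Ai_wkb_products hf hpre hRp (Or.inl ⟨rfl, rfl, hXp⟩)
      obtain ⟨Y, S, y, σ, hy, hσ, hYS, hYY, hSS, hA', hB'⟩ :=
        Ai_wkb_products hf hmre hRm (Or.inl ⟨rfl, rfl, hXm⟩)
      refine ⟨x, y, ρ, σ, -ωc ^ 2, (1 + x) ^ 2 * (1 + σ) ^ 2, hx, hy, hρ, hσ,
        by rw [norm_neg, norm_pow, norm_ωc, one_pow], ?_, ?_⟩
      · rw [norm_mul, norm_pow, norm_pow]
        calc _ ≤ (2 : ℝ) ^ 2 * 2 ^ 2 := by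
              gcongr
              · exact norm_one_add_le_two hx hbp
              · exact norm_one_add_le_two hσ hbm
          _ = 16 := by norm_num
      · rw [hDf, hA, hB, hA', hB']
        set J := (Wf f)⁻¹
        have e : 1 + ((Y + 0 * S) * (-ωc * Y + -ωc ^ 2 * S) + (X + 0 * R) * (-ωc * X + -ωc ^ 2 * R))
            * J / η + (X + 0 * R) * (-ωc * Y + -ωc ^ 2 * S) * ((Y + 0 * S) * (-ωc * X + -ωc ^ 2 * R)
              - (X + 0 * R) * (-ωc * Y + -ωc ^ 2 * S)) * J ^ 2 / η ^ 2 =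
            1 + (-ωc * (Y ^ 2 * J + X ^ 2 * J) - ωc ^ 2 * (Y * S * J + X * R * J)) / η +
            ((X * R * J) * (Y ^ 2 * J) - (X ^ 2 * J) * (Y * S * J) +
              ωc * ((X * R * J) * (Y * S * J) - (X ^ 2 * J) * (S ^ 2 * J))) / η ^ 2 := by
          linear_combination (X * Y * (Y * R - X * S) + ωc * X * S * (Y * R - X * S)) * J ^ 2 /
            η ^ 2 * h3
        have hTe : Complex.exp T = Gp * Complex.exp (-(4 / 3 * Complex.I * m ^ 3 / f)) := by
          rw [hT, sub_eq_add_neg, Complex.exp_add]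
        rw [e, hXR, hXX, hYS, hYY, hSS, hTe, ← hGp, ← hGm]
        linear_combination (Gm * (1 + y) ^ 2 / (2 * m) + Gp * (1 + x) ^ 2 / (2 * p)) / η * hω4 +
          (Gm * (1 + y) ^ 2 * (1 + x) * (1 + ρ) - Gp * (1 + x) ^ 2 * (1 + y) * (1 + σ)) /
            (4 * η ^ 2 * p * m) * ζc_pow_six
    · obtain ⟨X, R, x, ρ, hx, hρ, hXR, hXX, hRR, hA, hB⟩ :=
        Ai_wkb_products hf hpre hRp (Or.inr ⟨rfl, rfl, hXp⟩)
      obtain ⟨Y, S, y, σ, hy, hσ, hYS, hYY, hSS, hA', hB'⟩ :=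
        Ai_wkb_products hf hmre hRm (Or.inr ⟨rfl, rfl, hXm⟩)
      refine ⟨x, y, ρ, σ, ωc ^ 2, (1 + y) ^ 2 * (1 + ρ) ^ 2, hx, hy, hρ, hσ,
        by rw [norm_pow, norm_ωc, one_pow], ?_, ?_⟩
      · rw [norm_mul, norm_pow, norm_pow]
        calc _ ≤ (2 : ℝ) ^ 2 * 2 ^ 2 := by
              gcongr
              · exact norm_one_add_le_two hy hbm
              · exact norm_one_add_le_two hρ hbp
          _ = 16 := by norm_num
      · rw [hDf, hA, hB, hA', hB']
        set J := (Wf f)⁻¹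
        have e : 1 + ((Y + -ωc * S) * (-ωc * Y + 0 * S) + (X + -ωc * R) * (-ωc * X + 0 * R))
            * J / η + (X + -ωc * R) * (-ωc * Y + 0 * S) * ((Y + -ωc * S) * (-ωc * X + 0 * R)
              - (X + -ωc * R) * (-ωc * Y + 0 * S)) * J ^ 2 / η ^ 2 =
            1 + (-ωc * (Y ^ 2 * J + X ^ 2 * J) + ωc ^ 2 * (Y * S * J + X * R * J)) / η +
            ((X * R * J) * (Y ^ 2 * J) - (X ^ 2 * J) * (Y * S * J) +
              ωc * ((X * R * J) * (Y * S * J) - (Y ^ 2 * J) * (R ^ 2 * J))) / η ^ 2 := by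
          linear_combination (X * Y * (Y * R - X * S) - ωc * R * Y * (Y * R - X * S)) * J ^ 2 /
            η ^ 2 * h3
        have hTe : Complex.exp T = Gm * Complex.exp (-(4 / 3 * Complex.I * p ^ 3 / f)) := by
          rw [hT, sub_eq_add_neg, Complex.exp_add]
        rw [e, hXR, hXX, hYS, hYY, hRR, hTe, ← hGp, ← hGm]
        linear_combination (Gm * (1 + y) ^ 2 / (2 * m) + Gp * (1 + x) ^ 2 / (2 * p)) / η * hω4 +
          (Gm * (1 + y) ^ 2 * (1 + x) * (1 + ρ) - Gp * (1 + x) ^ 2 * (1 + y) * (1 + σ)) /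
            (4 * η ^ 2 * p * m) * ζc_pow_six
  obtain ⟨x, y, ρ, σ, c, t, hx, hy, hρ, hσ, hc, ht, hD⟩ := key
  refine ⟨x, y, ρ, σ, hx, hy, hρ, hσ, ?_⟩
  rw [hD, add_sub_cancel_left]
  have b1 := norm_one_add_le_two hx hbp
  have b2 := norm_one_add_le_two hy hbm
  have b3 := norm_one_add_le_two hρ hbp
  have b4 := norm_one_add_le_two hσ hbm
  refine (norm_add_le _ _).trans (add_le_add ((norm_add_le _ _).trans (add_le_add ?_ ?_)) ?_)
  · rw [norm_one]
  · rw [norm_mul, norm_div, norm_mul, hc, norm_pow, norm_ζc, norm_mul, Complex.norm_real,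
      Real.norm_of_nonneg hη.le, Complex.norm_ofNat]
    calc _ ≤ 1 * 1 ^ 2 / (2 * η) * (2 * 2 * (1 / ‖p‖) + 2 * 2 * (1 / ‖m‖)) := by
          gcongr
          refine (norm_add_le _ _).trans ?_
          simp only [norm_mul, norm_div, norm_one]
          gcongr
      _ = _ := by field_simp
  · rw [norm_mul, norm_div, norm_mul, norm_ωc, norm_pow, norm_ζc]
    simp only [norm_mul, norm_pow, Complex.norm_real, Real.norm_of_nonneg hη.le,
      Complex.norm_ofNat]
    calc _ ≤ 1 * 1 ^ 4 / (4 * (η ^ 2 * (‖p‖ * ‖m‖))) * (2 * 2 * (2 * 2) + 16 * ‖Complex.exp T‖) := by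
          gcongr
          refine (norm_sub_le _ _).trans ?_
          simp only [norm_mul]
          gcongr
      _ = _ := by field_simp; ring

/-- A square root of `1 + τ` near `1`, with the second order expansion of its cube. -/
lemma exists_sqrt_one_add {τ : ℂ} (hτ : ‖τ‖ ≤ 1 / 8) :
    ∃ u : ℂ, u ^ 2 = 1 + τ ∧ ‖u - 1‖ ≤ ‖τ‖ ∧ ‖u⁻¹ - 1‖ ≤ 2 * ‖τ‖ ∧
      ‖u ^ 3 - (1 + 3 / 2 * τ + 3 / 8 * τ ^ 2)‖ ≤ ‖τ‖ ^ 3 := by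
  set u := (1 + τ) ^ (1 / 2 : ℂ) with hu
  have hsq : u ^ 2 = 1 + τ := cpow_half_sq _
  have h1 : 0 ≤ u.re := by
    have h0 : 1 + τ ≠ 0 := by
      intro h
      have : ‖τ‖ = 1 := by rw [show τ = -1 by linear_combination h]; simp
      linarith
    rw [hu, Complex.cpow_def_of_ne_zero h0, Complex.exp_re]
    refine mul_nonneg (Real.exp_pos _).le (Real.cos_nonneg_of_mem_Icc ?_)
    have e : (Complex.log (1 + τ) * (1 / 2)).im = (1 + τ).arg / 2 := by
      rw [show (1 / 2 : ℂ) = ((1 / 2 : ℝ) : ℂ) by push_cast; ring, Complex.im_mul_ofReal,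
        Complex.log_im]; ring
    rw [e]
    have := Complex.neg_pi_lt_arg (1 + τ)
    have := Complex.arg_le_pi (1 + τ)
    constructor <;> linarith
  have h2 : 1 ≤ ‖u + 1‖ := by
    refine le_trans ?_ (Complex.re_le_norm _)
    simpa using h1
  have h3 : ‖u - 1‖ ≤ ‖τ‖ := by
    have : ‖u - 1‖ * ‖u + 1‖ = ‖τ‖ := by
      rw [← norm_mul]; congr 1; linear_combination hsq
    nlinarith [norm_nonneg (u - 1)]
  have h4 : 7 / 8 ≤ ‖u‖ := by
    have := norm_sub_norm_le (1 : ℂ) (1 - u)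
    rw [norm_one, sub_sub_cancel, norm_sub_rev] at this
    linarith
  refine ⟨u, hsq, h3, ?_, ?_⟩
  · have hu0 : u ≠ 0 := by rintro h; rw [h] at h4; norm_num at h4
    rw [show u⁻¹ - 1 = (1 - u) / u by field_simp, norm_div, norm_sub_rev, div_le_iff₀ (by linarith)]
    nlinarith [norm_nonneg τ]
  · have e : u ^ 3 - (1 + 3 / 2 * τ + 3 / 8 * τ ^ 2) =
        (u - 1) ^ 3 * (-(1 / 2) - 3 / 8 * (u - 1)) := by
      rw [show τ = u ^ 2 - 1 by linear_combination -hsq]; ring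
    have h5 : ‖-(1 / 2) - 3 / 8 * (u - 1)‖ ≤ 1 := by
      refine (norm_sub_le _ _).trans ?_
      rw [norm_mul, norm_neg]
      norm_num
      linarith
    rw [e, norm_mul, norm_pow]
    calc _ ≤ ‖τ‖ ^ 3 * 1 := by gcongr
      _ = _ := mul_one _

lemma norm_mul_sub_one_le {A B : ℂ} {α β s : ℝ} (hA : ‖A - 1‖ ≤ α * s) (hB : ‖B - 1‖ ≤ β * s)
    (hs0 : 0 ≤ s) (hs : s ≤ 1) (hα : 0 ≤ α) (hβ : 0 ≤ β) :
    ‖A * B - 1‖ ≤ (α + β + α * β) * s := by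
  rw [show A * B - 1 = (A - 1) + (B - 1) + (A - 1) * (B - 1) by ring]
  refine (norm_add₃_le).trans ?_
  rw [norm_mul]
  have : ‖A - 1‖ * ‖B - 1‖ ≤ (α * s) * (β * s) := by gcongr
  nlinarith [mul_nonneg (mul_nonneg hα hβ) hs0]

lemma cone_mul_of_norm_sub_one_le {c q u : ℂ} (hc : ‖c‖ = 1) (hq : ‖q‖ / 2 ≤ (c * q).re)
    (hu : ‖u - 1‖ ≤ 1 / 8) : ‖q * u‖ / 4 ≤ (c * (q * u)).re := by
  have e : c * (q * u) = c * q + c * q * (u - 1) := by ring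
  have h1 : -(‖q‖ * (1 / 8)) ≤ (c * q * (u - 1)).re := by
    have := Complex.abs_re_le_norm (c * q * (u - 1))
    rw [norm_mul, norm_mul, hc, one_mul, abs_le] at this
    nlinarith [norm_nonneg q]
  have h2 : ‖u‖ ≤ 9 / 8 := by
    have := norm_add_le (u - 1) 1
    rw [sub_add_cancel, norm_one] at this
    linarith
  rw [e, Complex.add_re, norm_mul]
  nlinarith [norm_nonneg q]

lemma gb_div_mul_exp_eq {κ η : ℝ} (hκ : 0 < κ) (hη : 0 < η) {q : ℂ} (hq : q ≠ 0) :
    gb (η / κ) (2 * κ * q) / (2 * q ^ 2 * η ^ 2) =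
      Complex.exp (-(2 * κ * q * Complex.I)) * (1 / (2 * η * q) + Complex.I / (4 * η ^ 2 * q ^ 2)) +
      Complex.exp (2 * κ * q * Complex.I) * (1 / (2 * η * q) - Complex.I / (4 * η ^ 2 * q ^ 2)) := by
  have h1 : (κ : ℂ) ≠ 0 := by exact_mod_cast hκ.ne'
  have h2 : (η : ℂ) ≠ 0 := by exact_mod_cast hη.ne'
  rw [gb, Complex.sin, Complex.cos, neg_mul]
  push_cast
  field_simp
  ring

lemma norm_mul_four_sub_one_le {A B C : ℂ} {s : ℝ} (hs0 : 0 ≤ s) (hs1 : s ≤ 1)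
    (hA : ‖A - 1‖ ≤ 1 * s) (hB : ‖B - 1‖ ≤ 1 * s) (hC : ‖C - 1‖ ≤ 1 * s) :
    ‖A * B * (C * C) - 1‖ ≤ 15 * s := by
  have h1 := norm_mul_sub_one_le hA hB hs0 hs1 (by norm_num) (by norm_num)
  have h2 := norm_mul_sub_one_le hC hC hs0 hs1 (by norm_num) (by norm_num)
  have h3 := norm_mul_sub_one_le h1 h2 hs0 hs1 (by norm_num) (by norm_num)
  linarith

lemma norm_mul_seven_sub_one_le {A B C D F G : ℂ} {s : ℝ} (hs0 : 0 ≤ s) (hs1 : s ≤ 1)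
    (hA : ‖A - 1‖ ≤ 1 * s) (hB : ‖B - 1‖ ≤ 1 * s) (hC : ‖C - 1‖ ≤ 1 * s) (hD : ‖D - 1‖ ≤ 1 * s)
    (hF : ‖F - 1‖ ≤ 1 * s) (hG : ‖G - 1‖ ≤ 1 * s) :
    ‖A * B * (C * C) * (D * F * G) - 1‖ ≤ 127 * s := by
  have h1 := norm_mul_four_sub_one_le hs0 hs1 hA hB hC
  have h2 := norm_mul_sub_one_le hD hF hs0 hs1 (by norm_num) (by norm_num)
  have h3 := norm_mul_sub_one_le h2 hG hs0 hs1 (by norm_num) (by norm_num)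
  have h4 := norm_mul_sub_one_le h1 h3 hs0 hs1 (by norm_num) (by norm_num)
  linarith

lemma norm_wkb_coeff_sub_le {η s : ℝ} (hη : 0 < η) {q A B c : ℂ} (hc : ‖c‖ = 1)
    (hs0 : 0 ≤ s) (hA : ‖A - 1‖ ≤ 15 * s) (hB : ‖B - 1‖ ≤ 127 * s) :
    ‖(1 / (2 * η * q) * A + c / (4 * η ^ 2 * q ^ 2) * B) -
      (1 / (2 * η * q) + c / (4 * η ^ 2 * q ^ 2))‖ ≤
      127 * s * (1 / (2 * η * ‖q‖) + 1 / (4 * η ^ 2 * ‖q‖ ^ 2)) := by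
  replace hA : ‖A - 1‖ ≤ 127 * s := hA.trans (by linarith)
  rw [show (1 / (2 * η * q) * A + c / (4 * η ^ 2 * q ^ 2) * B) -
      (1 / (2 * η * q) + c / (4 * η ^ 2 * q ^ 2)) =
      1 / (2 * η * q) * (A - 1) + c / (4 * η ^ 2 * q ^ 2) * (B - 1) by ring]
  refine (norm_add_le _ _).trans ?_
  simp only [norm_mul, norm_div, norm_pow, hc, norm_one, Complex.norm_real,
    Real.norm_of_nonneg hη.le, Complex.norm_ofNat]
  calc _ ≤ 1 / (2 * η * ‖q‖) * (127 * s) + 1 / (4 * η ^ 2 * ‖q‖ ^ 2) * (127 * s) := by gcongr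
    _ = _ := by ring

/-- The shifted square root `q u` of `q ^ 2 ± κ f` and the expansion of its phase. -/
lemma exists_shifted_root {κ f : ℝ} (hκ : 0 < κ) (hf : 0 < f) (hf1 : f ≤ 1) {q : ℂ} {s : ℝ}
    (hq0 : q ≠ 0) (hs : s = 8 * (κ * f / ‖q‖ ^ 2) + (1200 + 3 * κ ^ 3) * f / ‖q‖ ^ 3)
    (hs1 : s ≤ 1) (σ : ℂ) (hσ : σ = 1 ∨ σ = -1) :
    ∃ u ε : ℂ, (q * u) ^ 2 = q ^ 2 + σ * (κ * f) ∧
      u ≠ 0 ∧ ‖u - 1‖ ≤ 1 / 8 ∧ ‖u⁻¹ - 1‖ ≤ 1 * s ∧ ‖ε‖ ≤ 4 / 9 ∧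
      ‖Complex.exp ε - 1‖ ≤ 1 * s ∧ 600 * f ≤ ‖q * u‖ ^ 3 ∧ 600 * f / ‖q * u‖ ^ 3 ≤ 1 * s ∧
      1 / ‖q * u‖ ≤ 2 / ‖q‖ ∧
      4 / 3 * Complex.I * (q * u) ^ 3 / f = (4 / 3 * Complex.I * q ^ 3 / f +
        Complex.I * f * κ ^ 2 / (2 * q)) + σ * (2 * κ * q * Complex.I) + ε := by
  have hqN : 0 < ‖q‖ := norm_pos_iff.mpr hq0
  have hfc : (f : ℂ) ≠ 0 := by exact_mod_cast hf.ne'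
  have t1 : 0 ≤ κ * f / ‖q‖ ^ 2 := by positivity
  have t2 : 0 ≤ f / ‖q‖ ^ 3 := by positivity
  have t3 : 0 ≤ κ ^ 3 * (f / ‖q‖ ^ 3) := by positivity
  have hs' : s = 8 * (κ * f / ‖q‖ ^ 2) + 1200 * (f / ‖q‖ ^ 3) + 3 * (κ ^ 3 * (f / ‖q‖ ^ 3)) := by
    rw [hs]; ring
  set τ : ℂ := κ * f / q ^ 2 with hτ
  have hτn : ‖τ‖ = κ * f / ‖q‖ ^ 2 := by
    rw [hτ, norm_div, norm_mul, norm_pow, Complex.norm_real, Complex.norm_real,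
      Real.norm_of_nonneg hκ.le, Real.norm_of_nonneg hf.le]
  have hτ8 : ‖τ‖ ≤ 1 / 8 := by rw [hτn]; linarith
  have hσ2 : σ ^ 2 = 1 := by rcases hσ with rfl | rfl <;> norm_num
  have hσn : ‖σ * τ‖ = ‖τ‖ := by rcases hσ with rfl | rfl <;> simp
  obtain ⟨u, hu2, hu1, hui, hu3⟩ := exists_sqrt_one_add (τ := σ * τ) (by rw [hσn]; exact hτ8)
  rw [hσn] at hu1 hui hu3
  have hu78 : 7 / 8 ≤ ‖u‖ := by
    have := norm_sub_norm_le (1 : ℂ) (1 - u)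
    rw [norm_one, sub_sub_cancel, norm_sub_rev] at this
    linarith
  have hu0 : u ≠ 0 := by rintro rfl; norm_num at hu78
  have hcub : ‖q‖ ^ 3 / 2 ≤ ‖q * u‖ ^ 3 := by
    have : (7 / 8 : ℝ) ^ 3 ≤ ‖u‖ ^ 3 := by gcongr
    rw [norm_mul, mul_pow]
    nlinarith [pow_pos hqN 3]
  have hε : ‖4 / 3 * Complex.I * q ^ 3 / f *
      (u ^ 3 - (1 + 3 / 2 * (σ * τ) + 3 / 8 * (σ * τ) ^ 2))‖ ≤ 4 / 3 * (κ ^ 3 * (f / ‖q‖ ^ 3)) := by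
    rw [norm_mul, norm_div, norm_mul, norm_mul, norm_pow, Complex.norm_I, Complex.norm_real,
      Real.norm_of_nonneg hf.le]
    calc _ ≤ ‖(4 / 3 : ℂ)‖ * 1 * ‖q‖ ^ 3 / f * ‖τ‖ ^ 3 := by gcongr
      _ = 4 / 3 * (κ ^ 3 * (f / ‖q‖ ^ 3)) * f := by
        rw [hτn]
        norm_num
        field_simp
      _ ≤ 4 / 3 * (κ ^ 3 * (f / ‖q‖ ^ 3)) * 1 := by gcongr
      _ = _ := mul_one _
  have hε1 := hε.trans (show _ ≤ (4 / 9 : ℝ) by linarith)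
  refine ⟨u, _, ?_, hu0, hu1.trans hτ8, ?_, hε1, ?_, ?_, ?_, ?_, ?_⟩
  · rw [mul_pow, hu2, hτ]; field_simp
  · refine hui.trans ?_; rw [hτn]; linarith
  · refine (Complex.norm_exp_sub_one_le (hε1.trans (by norm_num))).trans ?_
    linarith
  · have : 1200 * f ≤ ‖q‖ ^ 3 := by
      have : 1200 * f / ‖q‖ ^ 3 ≤ 1 := by rw [mul_div_assoc]; linarith
      rwa [div_le_one (by positivity)] at this
    linarith
  · calc 600 * f / ‖q * u‖ ^ 3 ≤ 600 * f / (‖q‖ ^ 3 / 2) := by gcongr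
      _ = 1200 * (f / ‖q‖ ^ 3) := by field_simp; norm_num
      _ ≤ 1 * s := by linarith
  · rw [norm_mul, div_le_div_iff₀ (by positivity) hqN]
    nlinarith
  · rw [hτ, mul_pow]
    field_simp
    linear_combination (24 * κ ^ 2 * f ^ 2) * hσ2

set_option maxHeartbeats 1000000 in
/-- Quantitative comparison of `D_f` with its leading term on either of the two sectors. -/
lemma norm_Df_sub_main_le {κ η f : ℝ} (hκ : 0 < κ) (hη : 0 < η) (hf : 0 < f) (hf1 : f ≤ 1)
    {q : ℂ} {s Y : ℝ} (hq0 : q ≠ 0) (him : q.im ≤ 0) (hre : ‖q‖ / 2 ≤ q.re)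
    (hR : ‖q‖ / 2 ≤ (Complex.exp ((π / 6 : ℝ) * Complex.I) * q).re)
    (hs : s = 8 * (κ * f / ‖q‖ ^ 2) + (1200 + 3 * κ ^ 3) * f / ‖q‖ ^ 3) (hs1 : s ≤ 1)
    (hX : (‖q‖ / 2 ≤ (Complex.exp ((-(π / 6) : ℝ) * Complex.I) * q).re ∧ Y = -(4 * κ * q.im)) ∨
      (‖q‖ / 2 ≤ (Complex.exp ((π / 2 : ℝ) * Complex.I) * q).re ∧ Y = 0)) :
    ‖Df κ η f (q ^ 2) - gb (η / κ) (2 * κ * q) / (2 * q ^ 2 * η ^ 2) *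
        Complex.exp (4 / 3 * Complex.I * q ^ 3 / f + Complex.I * f * κ ^ 2 / (2 * q))‖ ≤
      254 * s * (1 / (2 * η * ‖q‖) + 1 / (4 * η ^ 2 * ‖q‖ ^ 2)) *
        Real.exp ((4 / 3 * Complex.I * q ^ 3 / f + Complex.I * f * κ ^ 2 / (2 * q)).re +
          -(2 * κ * q.im)) +
      (1 + 8 / (η * ‖q‖) + 16 / (η ^ 2 * ‖q‖ ^ 2) * (1 + 3 * Real.exp Y)) := by
  have hqN : 0 < ‖q‖ := norm_pos_iff.mpr hq0
  have hs0 : 0 ≤ s := by rw [hs]; positivity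
  obtain ⟨u, ε, hu2, hu0, hu1, hui, hε, hεe, hun, hux, huN, huE⟩ := exists_shifted_root hκ hf hf1 hq0 hs hs1 1 (Or.inl rfl)
  obtain ⟨v, δ, hv2, hv0, hv1, hvi, hδ, hδe, hvn, hvx, hvN, hvE⟩ := exists_shifted_root hκ hf hf1 hq0 hs hs1 (-1) (Or.inr rfl)
  rw [one_mul] at hu2
  rw [neg_one_mul, ← sub_eq_add_neg] at hv2
  have hpos (u : ℂ) (hu0 : u ≠ 0) (hu : ‖u - 1‖ ≤ 1 / 8) : 0 < (q * u).re := by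
    have := cone_mul_of_norm_sub_one_le (c := 1) (q := q) norm_one (by simpa using hre) hu
    rw [one_mul] at this
    refine lt_of_lt_of_le ?_ this
    have : 0 < ‖q * u‖ := norm_pos_iff.mpr (mul_ne_zero hq0 hu0)
    positivity
  have hrot (t : ℝ) : ‖Complex.exp (t * Complex.I)‖ = 1 := Complex.norm_exp_ofReal_mul_I t
  set E := 4 / 3 * Complex.I * q ^ 3 / f + Complex.I * f * κ ^ 2 / (2 * q) with hE
  have hwre : (2 * κ * q * Complex.I).re = -(2 * κ * q.im) := by
    simp
  have hT : ∃ T : ℂ, ‖Complex.exp T‖ ≤ 3 * Real.exp Y ∧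
      ((‖q * u‖ / 4 ≤ (Complex.exp ((-(π / 6) : ℝ) * Complex.I) * (q * u)).re ∧
        ‖q * v‖ / 4 ≤ (Complex.exp ((-(π / 6) : ℝ) * Complex.I) * (q * v)).re ∧
        T = 4 / 3 * Complex.I * (q * u) ^ 3 / f - 4 / 3 * Complex.I * (q * v) ^ 3 / f) ∨
      (‖q * u‖ / 4 ≤ (Complex.exp ((π / 2 : ℝ) * Complex.I) * (q * u)).re ∧
        ‖q * v‖ / 4 ≤ (Complex.exp ((π / 2 : ℝ) * Complex.I) * (q * v)).re ∧
        T = 4 / 3 * Complex.I * (q * v) ^ 3 / f - 4 / 3 * Complex.I * (q * u) ^ 3 / f)) := by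
    have hexp (T : ℂ) (hT : T.re ≤ Y + 1) : ‖Complex.exp T‖ ≤ 3 * Real.exp Y := by
      rw [Complex.norm_exp]
      calc Real.exp T.re ≤ Real.exp (Y + 1) := Real.exp_le_exp.mpr hT
        _ = Real.exp 1 * Real.exp Y := by rw [Real.exp_add, mul_comm]
        _ ≤ 3 * Real.exp Y := by
          have := Real.exp_one_lt_d9
          gcongr
          linarith
    have a1 := abs_le.mp (Complex.abs_re_le_norm ε)
    have a2 := abs_le.mp (Complex.abs_re_le_norm δ)
    rcases hX with ⟨hX, rfl⟩ | ⟨hX, rfl⟩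
    · refine ⟨_, hexp _ ?_, Or.inl ⟨cone_mul_of_norm_sub_one_le (hrot _) hX hu1,
        cone_mul_of_norm_sub_one_le (hrot _) hX hv1, rfl⟩⟩
      rw [huE, hvE, show E + 1 * (2 * κ * q * Complex.I) + ε -
        (E + -1 * (2 * κ * q * Complex.I) + δ) =
        2 * κ * q * Complex.I + 2 * κ * q * Complex.I + (ε - δ) by ring, Complex.add_re,
        Complex.add_re, hwre, Complex.sub_re]
      linarith
    · refine ⟨_, hexp _ ?_, Or.inr ⟨cone_mul_of_norm_sub_one_le (hrot _) hX hu1,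
        cone_mul_of_norm_sub_one_le (hrot _) hX hv1, rfl⟩⟩
      rw [huE, hvE, show E + -1 * (2 * κ * q * Complex.I) + δ -
        (E + 1 * (2 * κ * q * Complex.I) + ε) =
        (δ - ε) - (2 * κ * q * Complex.I + 2 * κ * q * Complex.I) by ring, Complex.sub_re,
        Complex.add_re, hwre, Complex.sub_re]
      nlinarith
  obtain ⟨T, hTn, hTX⟩ := hT
  obtain ⟨xp, xm, ρp, ρm, hxp, hxm, hρp, hρm, hD⟩ := exists_Df_sub_wkb_le hη hf hu2 hv2
    (hpos u hu0 hu1) (hpos v hv0 hv1) (cone_mul_of_norm_sub_one_le (hrot _) hR hu1)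
    (cone_mul_of_norm_sub_one_le (hrot _) hR hv1) hun hvn hTX
  have near1 (x : ℂ) (hx : ‖x‖ ≤ 1 * s) : ‖(1 + x) - 1‖ ≤ 1 * s := by
    rwa [add_sub_cancel_left]
  have nxp := near1 _ (hxp.trans hux)
  have nxm := near1 _ (hxm.trans hvx)
  have nρp := near1 _ (hρp.trans hux)
  have nρm := near1 _ (hρm.trans hvx)
  have cm := norm_wkb_coeff_sub_le hη (q := q) (c := Complex.I) Complex.norm_I hs0
    (norm_mul_four_sub_one_le hs0 hs1 hδe hvi nxm) (norm_mul_seven_sub_one_le hs0 hs1 hδe hvi nxm hui nxp nρp)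
  have cp := norm_wkb_coeff_sub_le hη (q := q) (c := -Complex.I)
    (by rw [norm_neg, Complex.norm_I]) hs0 (norm_mul_four_sub_one_le hs0 hs1 hεe hui nxp) (norm_mul_seven_sub_one_le hs0 hs1 hεe hui nxp hvi nxm nρm)
  set P := 127 * s * (1 / (2 * η * ‖q‖) + 1 / (4 * η ^ 2 * ‖q‖ ^ 2)) with hP
  set w := 2 * κ * q * Complex.I with hw
  have main : ∀ Mv Pv Mq Pq S₁ S₂ Dv : ℂ, ‖Mv - Mq‖ ≤ P → ‖Pv - Pq‖ ≤ P →
      ‖Dv - (S₁ * Mv + S₂ * Pv)‖ ≤ 1 + 8 / (η * ‖q‖) + 16 / (η ^ 2 * ‖q‖ ^ 2) * (1 + 3 * Real.exp Y) →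
      ‖S₁‖ ≤ Real.exp (E.re + -(2 * κ * q.im)) → ‖S₂‖ ≤ Real.exp (E.re + -(2 * κ * q.im)) →
      ‖Dv - (S₁ * Mq + S₂ * Pq)‖ ≤ 2 * P * Real.exp (E.re + -(2 * κ * q.im)) +
      (1 + 8 / (η * ‖q‖) + 16 / (η ^ 2 * ‖q‖ ^ 2) * (1 + 3 * Real.exp Y)) := by
    intro Mv Pv Mq Pq S₁ S₂ Dv h1 h2 h3 h4 h5
    rw [show Dv - (S₁ * Mq + S₂ * Pq) = S₁ * (Mv - Mq) + S₂ * (Pv - Pq) +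
      (Dv - (S₁ * Mv + S₂ * Pv)) by ring]
    refine (norm_add_le _ _).trans (add_le_add ((norm_add_le _ _).trans ?_) h3)
    rw [norm_mul, norm_mul]
    calc _ ≤ Real.exp (E.re + -(2 * κ * q.im)) * P + Real.exp (E.re + -(2 * κ * q.im)) * P := by
          gcongr
      _ = _ := by ring
  have hres := main _ _ _ _ (Complex.exp (E - w)) (Complex.exp (E + w)) (Df κ η f (q ^ 2)) cm cp ?_
    ?_ ?_
  · rw [gb_div_mul_exp_eq hκ hη hq0, ← hw]
    rw [hP] at hres
    convert hres using 1
    · congr 2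
      rw [sub_eq_add_neg E w, Complex.exp_add E (-w), Complex.exp_add E w]
      ring
    · ring
  · have hD' : ‖Df κ η f (q ^ 2) - _‖ ≤ _ := hD.trans (b := _) (show _ ≤ 1 + 8 / (η * ‖q‖) +
        16 / (η ^ 2 * ‖q‖ ^ 2) * (1 + 3 * Real.exp Y) by
      have e1 : 2 / η * (1 / ‖q * u‖ + 1 / ‖q * v‖) ≤ 2 / η * (2 / ‖q‖ + 2 / ‖q‖) := by gcongr
      have e2 : 4 / (η ^ 2 * (‖q * u‖ * ‖q * v‖)) * (1 + ‖Complex.exp T‖) ≤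
          4 / η ^ 2 * (2 / ‖q‖ * (2 / ‖q‖)) * (1 + 3 * Real.exp Y) := by
        rw [show 4 / (η ^ 2 * (‖q * u‖ * ‖q * v‖)) =
          4 / η ^ 2 * (1 / ‖q * u‖ * (1 / ‖q * v‖)) by field_simp]
        gcongr
      calc _ ≤ 1 + 2 / η * (2 / ‖q‖ + 2 / ‖q‖) +
            4 / η ^ 2 * (2 / ‖q‖ * (2 / ‖q‖)) * (1 + 3 * Real.exp Y) := by gcongr
        _ = _ := by field_simp; ring)
    convert hD' using 3
    rw [huE, hvE, show E + 1 * w + ε = (E + w) + ε by ring,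
      show E + -1 * w + δ = (E - w) + δ by ring, Complex.exp_add (E + w), Complex.exp_add (E - w)]
    field_simp
    ring
  · rw [Complex.norm_exp, Complex.sub_re, hwre, Real.exp_le_exp]
    nlinarith
  · rw [Complex.norm_exp, Complex.add_re, hwre]

lemma sin_complex_re_im (w : ℂ) : (Complex.sin w).re = Real.sin w.re * Real.cosh w.im ∧
    (Complex.sin w).im = Real.cos w.re * Real.sinh w.im := by
  have h := Complex.sin_eq w
  rw [← Complex.ofReal_sin, ← Complex.ofReal_cos, ← Complex.ofReal_cosh, ← Complex.ofReal_sinh] at h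
  rw [h]
  simp [-Complex.ofReal_sin, -Complex.ofReal_cos, -Complex.ofReal_cosh, -Complex.ofReal_sinh]

lemma cos_complex_re_im (w : ℂ) : (Complex.cos w).re = Real.cos w.re * Real.cosh w.im ∧
    (Complex.cos w).im = -(Real.sin w.re * Real.sinh w.im) := by
  have h := Complex.cos_eq w
  rw [← Complex.ofReal_sin, ← Complex.ofReal_cos, ← Complex.ofReal_cosh, ← Complex.ofReal_sinh] at h
  rw [h]
  simp [-Complex.ofReal_sin, -Complex.ofReal_cos, -Complex.ofReal_cosh, -Complex.ofReal_sinh]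

/-- `g_b` has no zeros off the real axis, quantitatively. -/
lemma sinh_le_norm_gb {b : ℝ} (hb : 0 < b) {w : ℂ} (hw : w.im ≤ 0) :
    b / 2 * ‖w‖ * Real.sinh (-w.im) ≤ ‖gb b w‖ := by
  obtain ⟨s1, s2⟩ := sin_complex_re_im w
  obtain ⟨c1, c2⟩ := cos_complex_re_im w
  set S := Real.sinh (-w.im) with hS
  set C := Real.cosh (-w.im) with hC
  have hS' : Real.sinh w.im = -S := by rw [hS, Real.sinh_neg, neg_neg]
  have hC' : Real.cosh w.im = C := by rw [hC, Real.cosh_neg]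
  rw [hS'] at s2 c2
  rw [hC'] at s1 c1
  have hS0 : 0 ≤ S := Real.sinh_nonneg_iff.mpr (by linarith)
  have hC0 : 0 < C := Real.cosh_pos _
  have hCS : C ^ 2 = S ^ 2 + 1 := Real.cosh_sq _
  have htrig := Real.sin_sq_add_cos_sq w.re
  have nc : ‖Complex.cos w‖ ^ 2 = Real.cos w.re ^ 2 + S ^ 2 := by
    rw [← Complex.normSq_eq_norm_sq, Complex.normSq_apply, c1, c2]
    linear_combination Real.cos w.re ^ 2 * hCS + S ^ 2 * htrig
  have ns : ‖Complex.sin w‖ ^ 2 = Real.sin w.re ^ 2 + S ^ 2 := by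
    rw [← Complex.normSq_eq_norm_sq, Complex.normSq_apply, s1, s2]
    linear_combination Real.sin w.re ^ 2 * hCS + S ^ 2 * htrig
  have hcosS : S ≤ ‖Complex.cos w‖ :=
    abs_le_of_sq_le_sq' (by nlinarith [sq_nonneg (Real.cos w.re)]) (norm_nonneg _) |>.2
  have hsinC : ‖Complex.sin w‖ ≤ C :=
    abs_le_of_sq_le_sq' (by nlinarith [sq_nonneg (Real.cos w.re)]) hC0.le |>.2
  rcases hS0.eq_or_lt with h0 | hSpos
  · rw [← h0, mul_zero]; exact norm_nonneg _
  have hcpos : 0 < ‖Complex.cos w‖ := hSpos.trans_le hcosS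
  by_cases hcase : b * (‖w‖ * ‖Complex.cos w‖) ≤ 2 * C
  · have key : S * C ≤ ‖gb b w‖ * ‖Complex.cos w‖ := by
      have h1 : ‖gb b w‖ * ‖Complex.cos w‖ = ‖gb b w * (starRingEnd ℂ) (Complex.cos w)‖ := by
        rw [norm_mul, Complex.norm_conj]
      have h2 : gb b w * (starRingEnd ℂ) (Complex.cos w) =
          Complex.sin w * (starRingEnd ℂ) (Complex.cos w) +
            w * ((b * ‖Complex.cos w‖ ^ 2 : ℝ) : ℂ) := by
        push_cast
        rw [gb, add_mul, ← Complex.mul_conj']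
        ring
      have h3 : (gb b w * (starRingEnd ℂ) (Complex.cos w)).im =
          -(S * C) + w.im * (b * ‖Complex.cos w‖ ^ 2) := by
        rw [h2, Complex.add_im, Complex.im_mul_ofReal, Complex.mul_im, Complex.conj_re,
          Complex.conj_im, s1, s2, c1, c2]
        linear_combination -(S * C) * htrig
      rw [h1]
      refine le_trans ?_ (Complex.abs_im_le_norm _)
      rw [h3]
      refine le_trans ?_ (neg_le_abs _)
      have : w.im * (b * ‖Complex.cos w‖ ^ 2) ≤ 0 :=
        mul_nonpos_of_nonpos_of_nonneg hw (by positivity)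
      linarith
    refine le_of_mul_le_mul_right (le_trans ?_ key) hcpos
    nlinarith
  · push Not at hcase
    have h1 : b * (‖w‖ * ‖Complex.cos w‖) - ‖Complex.sin w‖ ≤ ‖gb b w‖ := by
      have := norm_sub_norm_le (b * w * Complex.cos w) (-Complex.sin w)
      rw [norm_mul, norm_mul, Complex.norm_real, Real.norm_of_nonneg hb.le, norm_neg,
        sub_neg_eq_add, add_comm] at this
      rw [gb]
      linarith
    have : ‖w‖ * S ≤ ‖w‖ * ‖Complex.cos w‖ := by gcongr
    nlinarith

lemma norm_le_norm_gb_of_small {b : ℝ} (hb : 0 < b) {w : ℂ} (hw : ‖w‖ ≤ 1 / 2) :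
    ‖w‖ / 2 ≤ ‖gb b w‖ := by
  have taylor (z : ℂ) (hz : ‖z‖ ≤ 1 / 2) : ‖Complex.exp z - (1 + z + z ^ 2 / 2)‖ ≤ ‖z‖ ^ 3 * (2 / 9) := by
    have := Complex.exp_bound (x := z) (by linarith) (n := 3) (by norm_num)
    simp only [Finset.sum_range_succ, Finset.sum_range_zero, Nat.factorial] at this
    norm_num at this
    exact this
  have h1 := taylor (w * Complex.I) (by simpa using hw)
  have h2 := taylor (-w * Complex.I) (by simpa using hw)
  rw [norm_mul, Complex.norm_I, mul_one] at h1 h2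
  rw [norm_neg] at h2
  set r₁ := Complex.exp (w * Complex.I) - (1 + w * Complex.I + (w * Complex.I) ^ 2 / 2) with hr₁
  set r₂ := Complex.exp (-w * Complex.I) - (1 + -w * Complex.I + (-w * Complex.I) ^ 2 / 2) with hr₂
  have hg : gb b w = ((1 + b : ℝ) : ℂ) * w - (-((r₂ - r₁) * Complex.I / 2 +
      b * w * (-(w ^ 2 / 2) + (r₁ + r₂) / 2))) := by
    rw [gb, Complex.sin, Complex.cos, hr₁, hr₂]
    push_cast
    linear_combination (b * w ^ 3 / 2 - w) * Complex.I_sq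
  have e1 : ‖(r₂ - r₁) * Complex.I / 2‖ ≤ ‖w‖ ^ 3 * (2 / 9) := by
    rw [norm_div, norm_mul, Complex.norm_I, Complex.norm_ofNat]
    have := norm_sub_le r₂ r₁
    linarith
  have e2 : ‖-(w ^ 2 / 2) + (r₁ + r₂) / 2‖ ≤ ‖w‖ ^ 2 / 2 + ‖w‖ ^ 3 * (2 / 9) := by
    refine (norm_add_le _ _).trans ?_
    rw [norm_neg, norm_div, norm_div, norm_pow, Complex.norm_ofNat]
    have := norm_add_le r₁ r₂
    linarith
  have e3 : ‖-((r₂ - r₁) * Complex.I / 2 + b * w * (-(w ^ 2 / 2) + (r₁ + r₂) / 2))‖ ≤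
      ‖w‖ ^ 3 * (2 / 9) + b * ‖w‖ * (‖w‖ ^ 2 / 2 + ‖w‖ ^ 3 * (2 / 9)) := by
    rw [norm_neg]
    refine (norm_add_le _ _).trans (add_le_add e1 ?_)
    rw [norm_mul, norm_mul, Complex.norm_real, Real.norm_of_nonneg hb.le]
    gcongr
  have e4 := norm_sub_norm_le (((1 + b : ℝ) : ℂ) * w) (-((r₂ - r₁) * Complex.I / 2 +
      b * w * (-(w ^ 2 / 2) + (r₁ + r₂) / 2)))
  rw [← hg, norm_mul, Complex.norm_real, Real.norm_of_nonneg (by positivity)] at e4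
  have n0 := norm_nonneg w
  have q2 : ‖w‖ ^ 2 ≤ 1 / 4 := by nlinarith
  have q3 : ‖w‖ ^ 3 ≤ ‖w‖ * (1 / 4) := by rw [pow_succ' ‖w‖ 2]; gcongr
  have q4 : ‖w‖ ^ 2 / 2 + ‖w‖ ^ 3 * (2 / 9) ≤ 1 := by linarith
  have q5 : b * ‖w‖ * (‖w‖ ^ 2 / 2 + ‖w‖ ^ 3 * (2 / 9)) ≤ b * ‖w‖ * 1 := by gcongr
  linarith

lemma exp_mul_div_le_sinh {y y₀ : ℝ} (hy₀ : 0 ≤ y₀) (hy : y₀ ≤ y) :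
    Real.exp y * (y₀ / (1 + 2 * y₀)) ≤ Real.sinh y := by
  have hy0 : 0 ≤ y := hy₀.trans hy
  have h1 : y₀ / (1 + 2 * y₀) ≤ y / (1 + 2 * y) := by
    rw [div_le_div_iff₀ (by linarith) (by linarith)]; nlinarith
  have h2 : Real.exp y * (y / (1 + 2 * y)) ≤ Real.sinh y := by
    rw [← mul_div_assoc, div_le_iff₀ (by linarith), Real.sinh_eq]
    have e : Real.exp y = Real.exp (2 * y) * Real.exp (-y) := by
      rw [← Real.exp_add]; ring_nf
    have h3 := Real.add_one_le_exp (2 * y)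
    have : (1 + 2 * y) * Real.exp (-y) ≤ Real.exp y := by
      rw [e]; gcongr; linarith
    nlinarith
  exact (mul_le_mul_of_nonneg_left h1 (Real.exp_pos y).le).trans h2

/-- Lower bound for `g_{η/κ}(2κq)` when `q` stays away from the origin. -/
lemma le_norm_gb_of_le_sq {κ η r₀ f : ℝ} (hκ : 0 < κ) (hη : 0 < η) (hr₀ : 0 < r₀) (hf : 0 < f)
    (hf1 : f < 1) {q : ℂ} (hr : r₀ ≤ ‖q‖ ^ 2) (him : q.im ≤ 0)
    (hy : κ * f * Real.log (‖q‖ ^ 2 + f⁻¹) / ‖q‖ ^ 2 ≤ -(2 * κ * q.im)) :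
    η * κ / ((1 + 2 * (κ * (1 + 1 / r₀))) * (1 + 1 / r₀)) *
        (Real.log (‖q‖ ^ 2 + f⁻¹) * f * (1 / ‖q‖ + 1 / ‖q‖ ^ 3) * Real.exp (-(2 * κ * q.im))) ≤
      ‖gb (η / κ) (2 * κ * q)‖ := by
  have hp : 0 < ‖q‖ := by
    rcases (norm_nonneg q).eq_or_lt with h | h
    · rw [← h] at hr; norm_num at hr; linarith
    · exact h
  have hfi : 1 < f⁻¹ := (one_lt_inv₀ hf).2 hf1
  have him2 : (2 * (κ : ℂ) * q).im = 2 * κ * q.im := by simp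
  have h1 := sinh_le_norm_gb (b := η / κ) (by positivity) (w := 2 * κ * q)
    (by rw [him2]; nlinarith)
  have hn : ‖2 * (κ : ℂ) * q‖ = 2 * κ * ‖q‖ := by simp [abs_of_pos hκ]
  rw [him2, hn] at h1
  generalize ‖gb (η / κ) (2 * κ * q)‖ = G at *
  generalize ‖q‖ = p at *
  have hQ : 1 < p ^ 2 + f⁻¹ := by nlinarith
  have hL : 0 < Real.log (p ^ 2 + f⁻¹) := Real.log_pos hQ
  have hLle : f * Real.log (p ^ 2 + f⁻¹) ≤ f * p ^ 2 + 1 := by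
    have h := Real.log_le_sub_one_of_pos (by linarith : 0 < p ^ 2 + f⁻¹)
    have : f * (p ^ 2 + f⁻¹) = f * p ^ 2 + 1 := by field_simp
    nlinarith
  generalize Real.log (p ^ 2 + f⁻¹) = L at *
  generalize -(2 * κ * q.im) = y at *
  set B := κ * (1 + 1 / r₀) with hB
  have hy₀ : κ * f * L / p ^ 2 ≤ B := by
    have : 1 / p ^ 2 ≤ 1 / r₀ := one_div_le_one_div_of_le hr₀ hr
    have h2 : κ * f * L / p ^ 2 ≤ κ * (f + 1 / p ^ 2) := by
      rw [div_le_iff₀ (by positivity)]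
      have : κ * (f + 1 / p ^ 2) * p ^ 2 = κ * (f * p ^ 2 + 1) := by field_simp
      rw [this]; nlinarith
    refine h2.trans ?_
    rw [hB]; gcongr
  have hB0 : 0 < B := by positivity
  have h3 : Real.exp y * (κ * f * L / p ^ 2 / (1 + 2 * B)) ≤ Real.sinh y := by
    refine le_trans ?_ (exp_mul_div_le_sinh (by positivity) hy)
    gcongr
  have h4 : 1 / p + 1 / p ^ 3 ≤ (1 + 1 / r₀) / p := by
    have : 1 / p ^ 2 ≤ 1 / r₀ := one_div_le_one_div_of_le hr₀ hr
    have e : 1 / p + 1 / p ^ 3 = (1 + 1 / p ^ 2) / p := by field_simp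
    rw [e]; gcongr
  calc _ ≤ η * κ / ((1 + 2 * B) * (1 + 1 / r₀)) *
        (L * f * ((1 + 1 / r₀) / p) * Real.exp y) := by gcongr
    _ = η * p * (Real.exp y * (κ * f * L / p ^ 2 / (1 + 2 * B))) := by field_simp
    _ ≤ η * p * Real.sinh y := by gcongr
    _ = η / κ / 2 * (2 * κ * p) * Real.sinh y := by field_simp
    _ ≤ G := h1

/-- `f log(r + 1/f)` is dominated by `r²` when `f ^ a < r ≤ 1` and `a < 1/2`. -/
lemma mul_log_le_sq {a f r : ℝ} (ha1 : a < 1 / 2) (hf : 0 < f) (hf1 : f < 1)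
    (ha0 : 0 < a) (hfr : f ^ a < r) (hr1 : r ≤ 1) :
    f * Real.log (r + f⁻¹) ≤ 2 / (1 - 2 * a) * r ^ 2 := by
  have hε : 0 < 1 - 2 * a := by linarith
  have hfa : 0 < f ^ a := by positivity
  have hfi : 1 < f⁻¹ := (one_lt_inv₀ hf).2 hf1
  have h1 : Real.log (r + f⁻¹) ≤ (2 * f⁻¹) ^ (1 - 2 * a) / (1 - 2 * a) :=
    (Real.log_le_log (by linarith) (by linarith)).trans
      (Real.log_le_rpow_div (by positivity) hε)
  have h2 : (2 * f⁻¹) ^ (1 - 2 * a) = 2 ^ (1 - 2 * a) * f ^ (2 * a - 1) := by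
    rw [Real.mul_rpow (by norm_num) (by positivity), Real.inv_rpow hf.le, ← Real.rpow_neg hf.le]
    congr 2; ring
  have h3 : (2 : ℝ) ^ (1 - 2 * a) ≤ 2 := by
    calc (2 : ℝ) ^ (1 - 2 * a) ≤ 2 ^ (1 : ℝ) :=
          Real.rpow_le_rpow_of_exponent_le (by norm_num) (by linarith)
      _ = 2 := Real.rpow_one _
  have h4 : f * f ^ (2 * a - 1) = (f ^ a) ^ 2 := by
    rw [← Real.rpow_natCast, ← Real.rpow_mul hf.le]
    nth_rewrite 1 [← Real.rpow_one f]
    rw [← Real.rpow_add hf]; congr 1; push_cast; ring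
  have h5 : (f ^ a) ^ 2 ≤ r ^ 2 := by gcongr
  calc f * Real.log (r + f⁻¹) ≤ f * ((2 * f⁻¹) ^ (1 - 2 * a) / (1 - 2 * a)) := by gcongr
    _ = 2 ^ (1 - 2 * a) / (1 - 2 * a) * (f ^ a) ^ 2 := by rw [h2, ← h4]; ring
    _ ≤ 2 / (1 - 2 * a) * r ^ 2 := by gcongr

/-- Lower bound for `g_{η/κ}(2κq)` when `q` is close to the origin. -/
lemma le_norm_gb_of_sq_le {κ η a f : ℝ} (hκ : 0 < κ) (hη : 0 < η) (ha0 : 0 < a)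
    (ha1 : a < 1 / 2) (hf : 0 < f)
    (hf1 : f < 1) {q : ℂ} (hfr : f ^ a < ‖q‖ ^ 2) (hr1 : ‖q‖ ≤ 1) (hr2 : 4 * κ * ‖q‖ ≤ 1) :
    κ * (1 - 2 * a) / 8 *
        (Real.log (‖q‖ ^ 2 + f⁻¹) * f * (1 / ‖q‖ + 1 / ‖q‖ ^ 3) * Real.exp (-(2 * κ * q.im))) ≤
      ‖gb (η / κ) (2 * κ * q)‖ := by
  have hp : 0 < ‖q‖ := by
    have hfa : 0 < f ^ a := by positivity
    rcases (norm_nonneg q).eq_or_lt with h | h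
    · rw [← h] at hfr; norm_num at hfr; linarith
    · exact h
  have hn : ‖2 * (κ : ℂ) * q‖ = 2 * κ * ‖q‖ := by simp [abs_of_pos hκ]
  have h1 := norm_le_norm_gb_of_small (b := η / κ) (by positivity) (w := 2 * κ * q)
    (by rw [hn]; linarith)
  rw [hn] at h1
  have hq := (abs_le.1 (Complex.abs_im_le_norm q)).1
  have hy : Real.exp (-(2 * κ * q.im)) ≤ 2 := by
    have : -(2 * κ * q.im) ≤ 1 / 2 := by nlinarith
    calc Real.exp (-(2 * κ * q.im)) ≤ Real.exp (1 / 2) := Real.exp_le_exp.2 this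
      _ ≤ Real.exp (Real.log 2) := Real.exp_le_exp.2 (by linarith [Real.log_two_gt_d9])
      _ = 2 := Real.exp_log (by norm_num)
  have hL := mul_log_le_sq ha1 hf hf1 ha0 hfr (by nlinarith)
  have hfi : 1 < f⁻¹ := (one_lt_inv₀ hf).2 hf1
  have hL0 : 0 ≤ Real.log (‖q‖ ^ 2 + f⁻¹) := Real.log_nonneg (by nlinarith)
  generalize ‖gb (η / κ) (2 * κ * q)‖ = G at *
  have he := (Real.exp_pos (-(2 * κ * q.im))).le
  generalize Real.exp (-(2 * κ * q.im)) = e at *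
  generalize ‖q‖ = p at *
  generalize Real.log (p ^ 2 + f⁻¹) = L at *
  have hε : 0 < 1 - 2 * a := by linarith
  have h4 : 1 / p + 1 / p ^ 3 ≤ 2 / p ^ 3 := by
    have : 1 / p + 1 / p ^ 3 = (p ^ 2 + 1) / p ^ 3 := by field_simp
    rw [this]; gcongr; nlinarith
  calc _ ≤ κ * (1 - 2 * a) / 8 * (L * f * (2 / p ^ 3) * 2) := by gcongr
    _ = κ * (1 - 2 * a) / 8 * (f * L * (4 / p ^ 3)) := by ring
    _ ≤ κ * (1 - 2 * a) / 8 * (2 / (1 - 2 * a) * (p ^ 2) ^ 2 * (4 / p ^ 3)) := by gcongr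
    _ = 2 * κ * p / 2 := by field_simp; norm_num
    _ ≤ G := h1

/-- Uniform lower bound for `g_{η/κ}(2κq)` on the region where
`κ f log(|q|² + 1/f) / |q|² ≤ -2κ Im q`. -/
lemma exists_le_norm_gb {κ η a : ℝ} (hκ : 0 < κ) (hη : 0 < η) (ha0 : 0 < a) (ha1 : a < 1 / 2) :
    ∃ c > 0, ∀ (f : ℝ) (q : ℂ), 0 < f → f < 1 → f ^ a < ‖q‖ ^ 2 → q.im ≤ 0 →
      κ * f * Real.log (‖q‖ ^ 2 + f⁻¹) / ‖q‖ ^ 2 ≤ -(2 * κ * q.im) →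
      c * (Real.log (‖q‖ ^ 2 + f⁻¹) * f * (1 / ‖q‖ + 1 / ‖q‖ ^ 3) *
        Real.exp (-(2 * κ * q.im))) ≤ ‖gb (η / κ) (2 * κ * q)‖ := by
  set p₀ : ℝ := min 1 (1 / (4 * κ)) with hp₀
  have hp₀0 : 0 < p₀ := by positivity
  set c₁ := η * κ / ((1 + 2 * (κ * (1 + 1 / p₀ ^ 2))) * (1 + 1 / p₀ ^ 2)) with hc₁
  have hc₁0 : 0 < c₁ := by positivity
  have hc₂0 : 0 < κ * (1 - 2 * a) / 8 := by
    have : 0 < 1 - 2 * a := by linarith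
    positivity
  refine ⟨min c₁ (κ * (1 - 2 * a) / 8), lt_min hc₁0 hc₂0, fun f q hf hf1 hfr him hy => ?_⟩
  have hfi : 1 < f⁻¹ := (one_lt_inv₀ hf).2 hf1
  have hL0 : 0 ≤ Real.log (‖q‖ ^ 2 + f⁻¹) := Real.log_nonneg (by nlinarith [sq_nonneg ‖q‖])
  have hX : 0 ≤ Real.log (‖q‖ ^ 2 + f⁻¹) * f * (1 / ‖q‖ + 1 / ‖q‖ ^ 3) *
      Real.exp (-(2 * κ * q.im)) := by positivity
  rcases le_total p₀ ‖q‖ with h | h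
  · exact (mul_le_mul_of_nonneg_right (min_le_left _ _) hX).trans
      (le_norm_gb_of_le_sq hκ hη (by positivity) hf hf1 (by gcongr) him hy)
  · refine (mul_le_mul_of_nonneg_right (min_le_right _ _) hX).trans
      (le_norm_gb_of_sq_le hκ hη ha0 ha1 hf hf1 hfr (h.trans (min_le_left _ _)) ?_)
    have := h.trans (min_le_right _ _)
    rw [le_div_iff₀ (by positivity)] at this
    linarith

lemma mul_exp_neg_re_im (p φ : ℝ) :
    ((p : ℂ) * Complex.exp (-(φ * Complex.I))).re = p * Real.cos φ ∧
      ((p : ℂ) * Complex.exp (-(φ * Complex.I))).im = -(p * Real.sin φ) := by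
  have h : -((φ : ℂ) * Complex.I) = ((-φ : ℝ) : ℂ) * Complex.I := by push_cast; ring
  rw [h]
  constructor
  · rw [Complex.re_ofReal_mul, Complex.exp_ofReal_mul_I_re, Real.cos_neg]
  · rw [Complex.im_ofReal_mul, Complex.exp_ofReal_mul_I_im, Real.sin_neg]; ring

lemma exp_mul_polar_re (p φ ψ : ℝ) :
    (Complex.exp ((ψ : ℝ) * Complex.I) * ((p : ℂ) * Complex.exp (-(φ * Complex.I)))).re =
      p * Real.cos (φ - ψ) := by
  rw [← (mul_exp_neg_re_im p (φ - ψ)).1]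
  congr 1
  have : -(((φ - ψ : ℝ) : ℂ) * Complex.I) = ψ * Complex.I + -(φ * Complex.I) := by
    push_cast; ring
  rw [this, Complex.exp_add]; ring

lemma cube_phase_re (p φ f : ℝ) :
    (4 / 3 * Complex.I * ((p : ℂ) * Complex.exp (-(φ * Complex.I))) ^ 3 / f).re =
      4 / (3 * f) * p ^ 3 * Real.sin (3 * φ) := by
  have h := (mul_exp_neg_re_im (p ^ 3) (3 * φ)).2
  have e : 4 / 3 * Complex.I * ((p : ℂ) * Complex.exp (-(φ * Complex.I))) ^ 3 / f =
      ((4 / (3 * f) : ℝ) : ℂ) *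
        (Complex.I * (((p ^ 3 : ℝ) : ℂ) * Complex.exp (-((3 * φ : ℝ) * Complex.I)))) := by
    have : -(((3 * φ : ℝ) : ℂ) * Complex.I) = ((3 : ℕ) : ℂ) * (-(φ * Complex.I)) := by
      push_cast; ring
    rw [this, Complex.exp_nat_mul]
    push_cast
    rcases eq_or_ne f 0 with rfl | hf
    · simp
    · have : (f : ℂ) ≠ 0 := by exact_mod_cast hf
      field_simp
  rw [e, Complex.re_ofReal_mul, Complex.I_mul_re, h]; ring

/-- Jordan's inequality on the whole of `[0, π]`. -/
lemma two_div_pi_mul_le_sin {x d : ℝ} (h1 : d ≤ x) (h2 : d ≤ π - x) (h0 : 0 ≤ d) :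
    2 / π * d ≤ Real.sin x := by
  have hπ := Real.pi_pos
  rcases le_total x (π / 2) with h | h
  · exact (mul_le_mul_of_nonneg_left h1 (by positivity)).trans (Real.mul_le_sin (by linarith) h)
  · rw [← Real.sin_pi_sub]
    exact (mul_le_mul_of_nonneg_left h2 (by positivity)).trans
      (Real.mul_le_sin (by linarith) (by linarith))

/-- Terms of the determinant that are not exponentially large are negligible. -/
lemma remainder_le {η f p L E y Y : ℝ} (hη : 0 < η) (hf : 0 < f) (hf1 : f < 1) (hp : 0 < p)
    (hfp : f ≤ p ^ 2) (hL : L = Real.log (p ^ 2 + f⁻¹)) (hY0 : 0 ≤ Y)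
    (hY : Y ≤ E + y + 1 - 10 * L) :
    1 + 8 / (η * p) + 16 / (η ^ 2 * p ^ 2) * (1 + 3 * Real.exp Y) ≤
      3 * (1 + 16 / η + 64 / η ^ 2) * (f * (1 / p ^ 3 + 1 / p ^ 5)) * Real.exp (E + y) := by
  set Q := p ^ 2 + f⁻¹ with hQ
  have hfi : 1 < f⁻¹ := (one_lt_inv₀ hf).2 hf1
  have hQ1 : 1 ≤ Q := by nlinarith
  have hQ0 : 0 < Q := by linarith
  have hp2 : 1 / p ^ 2 ≤ Q := by
    have : 1 / p ^ 2 ≤ 1 / f := one_div_le_one_div_of_le hf hfp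
    rw [one_div f] at this
    nlinarith
  have hp1 : 1 / p ≤ 2 * Q := by
    have e : 1 / p ^ 2 = (1 / p) ^ 2 := by field_simp
    rw [e] at hp2
    nlinarith [sq_nonneg (1 / p - 1)]
  have hpQ : p ≤ Q := by
    have : p ^ 2 ≤ Q := by rw [hQ]; linarith
    nlinarith
  have hfQ : 1 / Q ≤ f := by
    rw [div_le_iff₀ hQ0]
    have : f * Q = f * p ^ 2 + 1 := by rw [hQ]; field_simp
    rw [this]; nlinarith [mul_pos hf (pow_pos hp 2)]
  have hexpY : Real.exp Y ≤ 3 * Real.exp (E + y) / Q ^ 10 := by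
    have : Real.exp (E + y + 1 - 10 * L) = Real.exp 1 * Real.exp (E + y) / Q ^ 10 := by
      rw [Real.exp_sub, Real.exp_add (E + y) 1, hL]
      have : Real.exp (10 * Real.log Q) = Q ^ 10 := by
        have h := Real.exp_nat_mul (Real.log Q) 10
        rw [Real.exp_log hQ0] at h
        exact_mod_cast h
      rw [this]; ring
    calc Real.exp Y ≤ _ := Real.exp_le_exp.2 hY
      _ = _ := this
      _ ≤ _ := by gcongr; linarith [Real.exp_one_lt_d9]
  have h1Y : 1 ≤ Real.exp Y := Real.one_le_exp hY0
  have hsmall : Q / Q ^ 10 ≤ f * (1 / p ^ 3 + 1 / p ^ 5) := by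
    have a1 : Q / Q ^ 10 ≤ 1 / Q * (1 / Q ^ 3) := by
      rw [div_mul_div_comm, div_le_div_iff₀ (by positivity) (by positivity)]
      calc Q * (Q * Q ^ 3) = Q ^ 5 := by ring
        _ ≤ Q ^ 10 := pow_le_pow_right₀ hQ1 (by norm_num)
        _ = 1 * 1 * Q ^ 10 := by ring
    have a2 : 1 / Q ^ 3 ≤ 1 / p ^ 3 + 1 / p ^ 5 := by
      have : 1 / Q ^ 3 ≤ 1 / p ^ 3 := by gcongr
      have : 0 < 1 / p ^ 5 := by positivity
      linarith
    exact a1.trans (by gcongr)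
  have hcoef : 1 + 8 / (η * p) + 64 / (η ^ 2 * p ^ 2) ≤ (1 + 16 / η + 64 / η ^ 2) * Q := by
    have a1 : 8 / (η * p) = 8 / η * (1 / p) := by field_simp
    have a2 : 64 / (η ^ 2 * p ^ 2) = 64 / η ^ 2 * (1 / p ^ 2) := by field_simp
    have b1 : 8 / η * (1 / p) ≤ 8 / η * (2 * Q) := by gcongr
    have b2 : 64 / η ^ 2 * (1 / p ^ 2) ≤ 64 / η ^ 2 * Q := by gcongr
    rw [a1, a2]
    have : (1 + 16 / η + 64 / η ^ 2) * Q = Q + 8 / η * (2 * Q) + 64 / η ^ 2 * Q := by ring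
    linarith
  calc 1 + 8 / (η * p) + 16 / (η ^ 2 * p ^ 2) * (1 + 3 * Real.exp Y)
      ≤ 1 * Real.exp Y + 8 / (η * p) * Real.exp Y +
        16 / (η ^ 2 * p ^ 2) * (Real.exp Y + 3 * Real.exp Y) := by
        gcongr
        · linarith
        · exact le_mul_of_one_le_right (by positivity) h1Y
    _ = (1 + 8 / (η * p) + 64 / (η ^ 2 * p ^ 2)) * Real.exp Y := by ring
    _ ≤ (1 + 16 / η + 64 / η ^ 2) * Q * (3 * Real.exp (E + y) / Q ^ 10) := by gcongr
    _ = 3 * (1 + 16 / η + 64 / η ^ 2) * (Q / Q ^ 10) * Real.exp (E + y) := by ring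
    _ ≤ _ := by gcongr

lemma amplitude_error_le {κ η f p : ℝ} (hκ : 0 < κ) (hη : 0 < η) (hf : 0 < f) (hp : 0 < p) :
    254 * (8 * (κ * f / p ^ 2) + (1200 + 3 * κ ^ 3) * f / p ^ 3) *
        (1 / (2 * η * p) + 1 / (4 * η ^ 2 * p ^ 2)) ≤
      508 * (8 * κ + (1200 + 3 * κ ^ 3)) * (1 / (2 * η) + 1 / (4 * η ^ 2)) *
        (f * (1 / p ^ 3 + 1 / p ^ 5)) := by
  set u := 1 / p with hu
  have hu0 : 0 < u := by positivity
  have e1 : 8 * (κ * f / p ^ 2) + (1200 + 3 * κ ^ 3) * f / p ^ 3 =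
      f * (8 * κ * u ^ 2 + (1200 + 3 * κ ^ 3) * u ^ 3) := by rw [hu]; field_simp
  have e2 : 1 / (2 * η * p) + 1 / (4 * η ^ 2 * p ^ 2) =
      1 / (2 * η) * u + 1 / (4 * η ^ 2) * u ^ 2 := by rw [hu]; field_simp
  have e3 : 1 / p ^ 3 + 1 / p ^ 5 = u ^ 3 + u ^ 5 := by rw [hu]; field_simp
  rw [e1, e2, e3]
  have hA : 0 < 8 * κ := by positivity
  have hB : 0 < 1200 + 3 * κ ^ 3 := by positivity
  have hC : 0 < 1 / (2 * η) := by positivity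
  have hD : 0 < 1 / (4 * η ^ 2) := by positivity
  generalize 8 * κ = A at *
  generalize 1200 + 3 * κ ^ 3 = B at *
  generalize 1 / (2 * η) = C at *
  generalize 1 / (4 * η ^ 2) = D at *
  have b1 : A * u ^ 2 + B * u ^ 3 ≤ (A + B) * (u ^ 2 + u ^ 3) := by
    have : 0 < A * u ^ 3 := by positivity
    have : 0 < B * u ^ 2 := by positivity
    linarith
  have b2 : C * u + D * u ^ 2 ≤ (C + D) * (u + u ^ 2) := by
    have : 0 < C * u ^ 2 := by positivity
    have : 0 < D * u := by positivity
    linarith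
  have b3 : (u ^ 2 + u ^ 3) * (u + u ^ 2) ≤ 2 * (u ^ 3 + u ^ 5) := by
    have : 0 ≤ u ^ 3 * (u - 1) ^ 2 := by positivity
    nlinarith
  calc 254 * (f * (A * u ^ 2 + B * u ^ 3)) * (C * u + D * u ^ 2)
      ≤ 254 * (f * ((A + B) * (u ^ 2 + u ^ 3))) * ((C + D) * (u + u ^ 2)) := by gcongr
    _ = 254 * f * (A + B) * (C + D) * ((u ^ 2 + u ^ 3) * (u + u ^ 2)) := by ring
    _ ≤ 254 * f * (A + B) * (C + D) * (2 * (u ^ 3 + u ^ 5)) := by gcongr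
    _ = _ := by ring

/-- Growth of the real phase `4 p³ sin(3φ) / (3f)` inside the sector. -/
lemma twenty_log_le_phase {f p φ L M : ℝ} (hf : 0 < f) (hp : 0 < p) (hL : 0 < L) (hM : 20 < M)
    (h1 : M * f * L / p ^ 3 < 2 * φ) (h2 : M * f * L / p ^ 3 < 2 * π / 3 - 2 * φ) :
    20 * L ≤ 4 / (3 * f) * p ^ 3 * Real.sin (3 * φ) := by
  have hπ := Real.pi_pos
  have hM0 : 0 < M := by linarith
  have hd : 0 < M * f * L / p ^ 3 := by positivity
  have hs : 2 / π * (3 / 2 * (M * f * L / p ^ 3)) ≤ Real.sin (3 * φ) :=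
    two_div_pi_mul_le_sin (by linarith) (by linarith) (by positivity)
  calc 20 * L ≤ 4 / π * M * L := by
        have : 1 ≤ 4 / π := by rw [le_div_iff₀ hπ]; linarith [Real.pi_le_four]
        nlinarith [mul_pos hM0 hL]
    _ = 4 / (3 * f) * p ^ 3 * (2 / π * (3 / 2 * (M * f * L / p ^ 3))) := by field_simp
    _ ≤ _ := by gcongr

lemma kappa_mul_log_le_neg_im {κ f p φ L M : ℝ} (hκ : 0 < κ) (hf : 0 < f) (hp : 0 < p)
    (hL : 0 < L) (hM : 20 < M)
    (h1 : M * f * L / p ^ 3 < 2 * φ) (h2 : M * f * L / p ^ 3 < 2 * π / 3 - 2 * φ) :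
    κ * f * L / p ^ 2 ≤ 2 * κ * (p * Real.sin φ) := by
  have hπ := Real.pi_pos
  have hM0 : 0 < M := by linarith
  have hd : 0 < M * f * L / p ^ 3 := by positivity
  have hs : 2 / π * (1 / 2 * (M * f * L / p ^ 3)) ≤ Real.sin φ :=
    two_div_pi_mul_le_sin (by linarith) (by linarith) (by positivity)
  calc κ * f * L / p ^ 2 = 1 * (κ * f * L / p ^ 2) := by ring
    _ ≤ 2 * M / π * (κ * f * L / p ^ 2) := by
        gcongr
        rw [le_div_iff₀ hπ]; linarith [Real.pi_le_four]
    _ = 2 * κ * (p * (2 / π * (1 / 2 * (M * f * L / p ^ 3)))) := by field_simp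
    _ ≤ _ := by gcongr

lemma two_mul_le_phase {κ f p φ : ℝ} (hf : 0 < f) (hp : 0 < p)
    (hκp : 8 * (κ * f / p ^ 2) ≤ 1) (h0 : 0 ≤ φ) (h1 : φ ≤ π / 6) :
    2 * (2 * κ * (p * Real.sin φ)) ≤ 4 / (3 * f) * p ^ 3 * Real.sin (3 * φ) := by
  have hπ := Real.pi_pos
  have hs0 : 0 ≤ Real.sin φ := Real.sin_nonneg_of_nonneg_of_le_pi h0 (by linarith)
  have hs1 : Real.sin φ ≤ 1 / 2 := by
    rw [← Real.sin_pi_div_six]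
    exact Real.sin_le_sin_of_le_of_le_pi_div_two (by linarith) (by linarith) h1
  have hs3 : 2 * Real.sin φ ≤ Real.sin (3 * φ) := by
    rw [Real.sin_three_mul]; nlinarith [mul_nonneg hs0 hs0]
  have hκ8 : 8 * κ * f ≤ p ^ 2 := by
    have e : 8 * (κ * f / p ^ 2) = 8 * κ * f / p ^ 2 := by ring
    rw [e, div_le_one (by positivity)] at hκp
    exact hκp
  calc 2 * (2 * κ * (p * Real.sin φ)) = 8 * κ * f * (p * Real.sin φ / (2 * f)) := by
        field_simp; ring
    _ ≤ p ^ 2 * (p * Real.sin φ / (2 * f)) := by gcongr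
    _ ≤ 4 / (3 * f) * p ^ 3 * (2 * Real.sin φ) := by
        have : 4 / (3 * f) * p ^ 3 * (2 * Real.sin φ) =
          16 / 3 * (p ^ 2 * (p * Real.sin φ / (2 * f))) := by field_simp; ring
        rw [this]
        have : 0 ≤ p ^ 2 * (p * Real.sin φ / (2 * f)) := by positivity
        linarith
    _ ≤ _ := by gcongr

/-- Absolute error of the leading-order approximation in the sector. -/
lemma norm_Df_sub_le_of_sector {κ η f p φ L M : ℝ} (hκ : 0 < κ) (hη : 0 < η) (hf : 0 < f)
    (hf1 : f < 1) (hp : 0 < p) (hfp : f ≤ p ^ 2) (hM : 20 < M)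
    (hs1 : 8 * (κ * f / p ^ 2) + (1200 + 3 * κ ^ 3) * f / p ^ 3 ≤ 1)
    (hphase : f * κ ^ 2 / (2 * p) ≤ 1) (hL : L = Real.log (p ^ 2 + f⁻¹))
    (h1 : M * f * L / p ^ 3 < 2 * φ) (h2 : M * f * L / p ^ 3 < 2 * π / 3 - 2 * φ) {q : ℂ}
    (hq : q = (p : ℂ) * Complex.exp (-(φ * Complex.I))) :
    ‖Df κ η f (q ^ 2) - gb (η / κ) (2 * κ * q) / (2 * q ^ 2 * η ^ 2) *
        Complex.exp (4 / 3 * Complex.I * q ^ 3 / f + Complex.I * f * κ ^ 2 / (2 * q))‖ ≤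
      (508 * (8 * κ + (1200 + 3 * κ ^ 3)) * (1 / (2 * η) + 1 / (4 * η ^ 2)) +
        3 * (1 + 16 / η + 64 / η ^ 2)) * (f * (1 / p ^ 3 + 1 / p ^ 5)) *
      Real.exp ((4 / 3 * Complex.I * q ^ 3 / f + Complex.I * f * κ ^ 2 / (2 * q)).re +
        -(2 * κ * q.im)) := by
  have hπ := Real.pi_pos
  have hfi : 1 < f⁻¹ := (one_lt_inv₀ hf).2 hf1
  have hL0 : 0 < L := by rw [hL]; exact Real.log_pos (by nlinarith)
  have hM0 : 0 < M := by linarith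
  have hd : 0 < M * f * L / p ^ 3 := by positivity
  have hφ0 : 0 < φ := by linarith
  have hφ1 : φ < π / 3 := by linarith
  have hqn : ‖q‖ = p := by
    have e : -((φ : ℂ) * Complex.I) = ((-φ : ℝ) : ℂ) * Complex.I := by push_cast; ring
    rw [hq, e, norm_mul, Complex.norm_exp_ofReal_mul_I, Complex.norm_real, Real.norm_eq_abs,
      abs_of_pos hp, mul_one]
  have hqre : q.re = p * Real.cos φ := by rw [hq]; exact (mul_exp_neg_re_im p φ).1
  have hqim : q.im = -(p * Real.sin φ) := by rw [hq]; exact (mul_exp_neg_re_im p φ).2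
  have hq0 : q ≠ 0 := by rw [← norm_pos_iff, hqn]; exact hp
  have hsin : 0 < Real.sin φ := Real.sin_pos_of_pos_of_lt_pi hφ0 (by linarith)
  have hcos : ∀ x : ℝ, |x| ≤ π / 3 → p / 2 ≤ p * Real.cos x := by
    intro x hx
    have : Real.cos (π / 3) ≤ Real.cos |x| :=
      Real.cos_le_cos_of_nonneg_of_le_pi (abs_nonneg x) (by linarith) hx
    rw [Real.cos_abs, Real.cos_pi_div_three] at this
    nlinarith
  have hrot : ∀ ψ : ℝ, (Complex.exp ((ψ : ℝ) * Complex.I) * q).re = p * Real.cos (φ - ψ) := by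
    intro ψ; rw [hq]; exact exp_mul_polar_re p φ ψ
  set E := (4 / 3 * Complex.I * q ^ 3 / f + Complex.I * f * κ ^ 2 / (2 * q)).re with hE
  have hElow : 4 / (3 * f) * p ^ 3 * Real.sin (3 * φ) - 1 ≤ E := by
    have e1 : (4 / 3 * Complex.I * q ^ 3 / f).re = 4 / (3 * f) * p ^ 3 * Real.sin (3 * φ) := by
      rw [hq]; exact cube_phase_re p φ f
    have e2 : ‖Complex.I * f * κ ^ 2 / (2 * q)‖ = f * κ ^ 2 / (2 * p) := by
      simp [hqn, abs_of_pos hf]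
    have e3 := (abs_le.1 (Complex.abs_re_le_norm (Complex.I * f * κ ^ 2 / (2 * q)))).1
    rw [hE, Complex.add_re, e1]
    linarith
  have hT := twenty_log_le_phase hf hp hL0 hM h1 h2
  have hy0 : 0 ≤ 2 * κ * (p * Real.sin φ) := by positivity
  have hyq : -(2 * κ * q.im) = 2 * κ * (p * Real.sin φ) := by rw [hqim]; ring
  obtain ⟨Y, hY0, hYle, hX⟩ : ∃ Y : ℝ, 0 ≤ Y ∧ Y ≤ E + -(2 * κ * q.im) + 1 - 10 * L ∧
      ((‖q‖ / 2 ≤ (Complex.exp ((-(π / 6) : ℝ) * Complex.I) * q).re ∧ Y = -(4 * κ * q.im)) ∨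
        (‖q‖ / 2 ≤ (Complex.exp ((π / 2 : ℝ) * Complex.I) * q).re ∧ Y = 0)) := by
    rcases le_total φ (π / 6) with h | h
    · have hκp : 8 * (κ * f / p ^ 2) ≤ 1 := by
        have : 0 < (1200 + 3 * κ ^ 3) * f / p ^ 3 := by positivity
        linarith
      have hTy := two_mul_le_phase (κ := κ) hf hp hκp hφ0.le h
      refine ⟨-(4 * κ * q.im), by linarith, by linarith, Or.inl ⟨?_, rfl⟩⟩
      rw [hqn, hrot]
      exact hcos _ (abs_le.2 ⟨by linarith, by linarith⟩)
    · refine ⟨0, le_rfl, by linarith, Or.inr ⟨?_, rfl⟩⟩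
      rw [hqn, hrot]
      exact hcos _ (abs_le.2 ⟨by linarith, by linarith⟩)
  have hmain := norm_Df_sub_main_le hκ hη hf hf1.le (q := q) (Y := Y) hq0
    (by rw [hqim]; nlinarith) (by rw [hqn, hqre]; exact hcos _ (abs_le.2 ⟨by linarith, by linarith⟩))
    (by rw [hqn, hrot]; exact hcos _ (abs_le.2 ⟨by linarith, by linarith⟩))
    rfl (by rw [hqn]; exact hs1) hX
  rw [hqn] at hmain
  refine hmain.trans ?_
  have ha := mul_le_mul_of_nonneg_right (amplitude_error_le hκ hη hf hp)
    (Real.exp_pos (E + -(2 * κ * q.im))).le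
  have hr := remainder_le hη hf hf1 hp hfp hL hY0 hYle
  linarith

lemma relative_error_le {η c C₀ f p L X e G : ℝ} (hη : 0 < η) (hc : 0 < c) (hC₀ : 0 ≤ C₀)
    (hL : 0 < L) (hp : 0 < p) (hX : 0 ≤ X) (hG : c * (L * f * (1 / p + 1 / p ^ 3) * e) ≤ G) :
    C₀ * (f * (1 / p ^ 3 + 1 / p ^ 5)) * (X * e) ≤
      C₀ * (2 * η ^ 2) / c * (G / (2 * p ^ 2 * η ^ 2) * X) / L := by
  calc C₀ * (f * (1 / p ^ 3 + 1 / p ^ 5)) * (X * e) = C₀ * (2 * η ^ 2) / c *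
        (c * (L * f * (1 / p + 1 / p ^ 3) * e) / (2 * p ^ 2 * η ^ 2) * X) / L := by
        field_simp
    _ ≤ _ := by gcongr

/-- Relative error of the leading-order approximation, in the variable `q = √z`. -/
lemma exists_norm_Df_sub_le {κ η a M : ℝ} (hκ : 0 < κ) (hη : 0 < η) (ha0 : 0 < a)
    (ha1 : a < 1 / 2) (hM : 20 < M) :
    ∃ f₀ > (0 : ℝ), ∃ C > (0 : ℝ), ∀ f p φ L : ℝ, ∀ q : ℂ, 0 < f → f < f₀ → 0 < p →
      f ^ a < p ^ 2 → L = Real.log (p ^ 2 + f⁻¹) →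
      M * f * L / p ^ 3 < 2 * φ → M * f * L / p ^ 3 < 2 * π / 3 - 2 * φ →
      q = (p : ℂ) * Complex.exp (-(φ * Complex.I)) →
      ‖Df κ η f (q ^ 2) - gb (η / κ) (2 * κ * q) / (2 * q ^ 2 * η ^ 2) *
          Complex.exp (4 / 3 * Complex.I * q ^ 3 / f + Complex.I * f * κ ^ 2 / (2 * q))‖ ≤
        C * ‖gb (η / κ) (2 * κ * q) / (2 * q ^ 2 * η ^ 2) *
          Complex.exp (4 / 3 * Complex.I * q ^ 3 / f + Complex.I * f * κ ^ 2 / (2 * q))‖ / L := by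
  obtain ⟨c, hc, hg⟩ := exists_le_norm_gb hκ hη ha0 ha1
  set A := 8 * κ + (1200 + 3 * κ ^ 3) + κ ^ 2 with hA
  have hA1 : 1 < A := by
    have : 0 < κ ^ 3 := by positivity
    nlinarith
  have hA0 : 0 < A := by linarith
  set C₀ := 508 * (8 * κ + (1200 + 3 * κ ^ 3)) * (1 / (2 * η) + 1 / (4 * η ^ 2)) +
        3 * (1 + 16 / η + 64 / η ^ 2) with hC₀
  have hC₀0 : 0 < C₀ := by positivity
  refine ⟨(1 / A) ^ 4, by positivity, C₀ * (2 * η ^ 2) / c, by positivity, ?_⟩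
  intro f p φ L q hf hff hp hfa hL h1 h2 hq
  obtain ⟨t, ht0, htf⟩ : ∃ t : ℝ, 0 < t ∧ f = t ^ 4 := by
    refine ⟨f ^ (1 / 4 : ℝ), by positivity, ?_⟩
    rw [← Real.rpow_natCast, ← Real.rpow_mul hf.le]; norm_num
  have htA : t < 1 / A := by
    rw [htf] at hff
    exact lt_of_pow_lt_pow_left₀ 4 (by positivity) hff
  have hA' : 1 / A < 1 := by rw [div_lt_one hA0]; exact hA1
  have ht1 : t < 1 := htA.trans hA'
  have hAt : A * t ≤ 1 := by
    rw [lt_div_iff₀ hA0] at htA; linarith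
  have hf1 : f < 1 := by rw [htf]; exact pow_lt_one₀ ht0.le ht1 (by norm_num)
  have htp : t < p := by
    have : t ^ 2 ≤ f ^ a := by
      calc t ^ 2 = f ^ (1 / 2 : ℝ) := by
            rw [htf, ← Real.rpow_natCast t 4, ← Real.rpow_mul ht0.le, ← Real.rpow_natCast t 2]
            norm_num
        _ ≤ f ^ a := Real.rpow_le_rpow_of_exponent_ge hf hf1.le ha1.le
    exact lt_of_pow_lt_pow_left₀ 2 hp.le (this.trans_lt hfa)
  have hfp3 : f / p ^ 3 ≤ t := by
    rw [div_le_iff₀ (by positivity), htf]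
    calc t ^ 4 = t * t ^ 3 := by ring
      _ ≤ t * p ^ 3 := by gcongr
  have hfp2 : f / p ^ 2 ≤ t := by
    rw [div_le_iff₀ (by positivity), htf]
    calc t ^ 4 = t * t ^ 2 * t := by ring
      _ ≤ t * p ^ 2 * 1 := by gcongr
      _ = t * p ^ 2 := by ring
  have hfp1 : f / p ≤ t := by
    rw [div_le_iff₀ (by positivity), htf]
    calc t ^ 4 = t * t * t ^ 2 := by ring
      _ ≤ t * p * 1 := by gcongr; exact pow_le_one₀ ht0.le ht1.le
      _ = t * p := by ring
  have hfp : f ≤ p ^ 2 := by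
    rw [div_le_iff₀ (by positivity)] at hfp2
    exact hfp2.trans (mul_le_of_le_one_left (by positivity) ht1.le)
  have hκ3 : 0 < 1200 + 3 * κ ^ 3 := by positivity
  have hs1 : 8 * (κ * f / p ^ 2) + (1200 + 3 * κ ^ 3) * f / p ^ 3 ≤ 1 := by
    calc _ = 8 * κ * (f / p ^ 2) + (1200 + 3 * κ ^ 3) * (f / p ^ 3) := by ring
      _ ≤ 8 * κ * t + (1200 + 3 * κ ^ 3) * t := by gcongr
      _ ≤ A * t := by rw [hA]; nlinarith [mul_pos (pow_pos hκ 2) ht0]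
      _ ≤ 1 := hAt
  have hphase : f * κ ^ 2 / (2 * p) ≤ 1 := by
    calc _ = κ ^ 2 / 2 * (f / p) := by field_simp
      _ ≤ κ ^ 2 / 2 * t := by gcongr
      _ ≤ A * t := by
        gcongr
        have : 0 ≤ κ ^ 2 := by positivity
        rw [hA]; linarith
      _ ≤ 1 := hAt
  have hmain := norm_Df_sub_le_of_sector (η := η) hκ hη hf hf1 hp hfp hM hs1 hphase hL h1 h2 hq
  refine hmain.trans ?_
  have hfi : 1 < f⁻¹ := (one_lt_inv₀ hf).2 hf1
  have hL0 : 0 < L := by rw [hL]; exact Real.log_pos (by nlinarith)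
  have hqn : ‖q‖ = p := by
    have e : -((φ : ℂ) * Complex.I) = ((-φ : ℝ) : ℂ) * Complex.I := by push_cast; ring
    rw [hq, e, norm_mul, Complex.norm_exp_ofReal_mul_I, Complex.norm_real, Real.norm_eq_abs,
      abs_of_pos hp, mul_one]
  have hqim : q.im = -(p * Real.sin φ) := by rw [hq]; exact (mul_exp_neg_re_im p φ).2
  have hy := kappa_mul_log_le_neg_im hκ hf hp hL0 hM h1 h2
  have hy' : κ * f * L / p ^ 2 ≤ -(2 * κ * q.im) := by rw [hqim]; linarith
  have him : q.im ≤ 0 := by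
    have h0 : 0 ≤ κ * f * L / p ^ 2 := by positivity
    have h3 : 0 ≤ κ * -q.im := by linarith
    linarith [nonneg_of_mul_nonneg_right h3 hκ]
  have hlow := hg f q hf hf1 (by rw [hqn]; exact hfa) him (by rw [hqn, ← hL]; exact hy')
  rw [hqn, ← hL] at hlow
  rw [norm_mul, norm_div, Complex.norm_exp]
  have hden : ‖2 * q ^ 2 * (η : ℂ) ^ 2‖ = 2 * p ^ 2 * η ^ 2 := by simp [hqn]
  rw [hden, Real.exp_add]
  exact relative_error_le hη hc hC₀0.le hL0 hp (Real.exp_pos _).le hlow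

end DeterminantAsymptotics

/-- Approximation of `D_f` by
`F₁(z) = (g_{η/κ}(2κ√z)/(2zη²))·exp(i4z^{3/2}/(3f) + ifκ²/(2√z))` in the
region `R₁`, with relative error `O(1/log(r + f⁻¹))`; the half powers are
taken with the branch `z^{1/2} = r^{1/2}e^{iθ/2}`, `z^{3/2} = r^{3/2}e^{3iθ/2}`. -/
theorem stmt9 (κ η : ℝ) (hκ : 0 < κ) (hη : 0 < η) (a M : ℝ)
    (ha0 : 0 < a) (ha1 : a < 1 / 2) (hM : 20 < M) :
    ∃ f₀ > (0 : ℝ), ∃ C > (0 : ℝ), ∀ f : ℝ, 0 < f → f < f₀ → ∀ r θ : ℝ,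
      f ^ a < r →
      -(2 * π / 3) + r ^ (-(3 : ℝ) / 2) * M * f * Real.log (r + f⁻¹) < θ →
      θ < -(r ^ (-(3 : ℝ) / 2) * M * f * Real.log (r + f⁻¹)) →
      ‖(Df κ η f ((r : ℂ) * Complex.exp (Complex.I * θ)) -
          gb (η / κ) (2 * κ * (((r ^ ((1 : ℝ) / 2) : ℝ) : ℂ) * Complex.exp (Complex.I * θ / 2)))
            / (2 * ((r : ℂ) * Complex.exp (Complex.I * θ)) * η ^ 2) *
            Complex.exp (Complex.I * 4 *
                (((r ^ ((3 : ℝ) / 2) : ℝ) : ℂ) * Complex.exp (3 * Complex.I * θ / 2)) / (3 * f)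
              + Complex.I * f * κ ^ 2 /
                (2 * (((r ^ ((1 : ℝ) / 2) : ℝ) : ℂ) * Complex.exp (Complex.I * θ / 2)))))‖ ≤
        C * ‖(gb (η / κ)
              (2 * κ * (((r ^ ((1 : ℝ) / 2) : ℝ) : ℂ) * Complex.exp (Complex.I * θ / 2)))
            / (2 * ((r : ℂ) * Complex.exp (Complex.I * θ)) * η ^ 2) *
            Complex.exp (Complex.I * 4 *
                (((r ^ ((3 : ℝ) / 2) : ℝ) : ℂ) * Complex.exp (3 * Complex.I * θ / 2)) / (3 * f)
              + Complex.I * f * κ ^ 2 /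
                (2 * (((r ^ ((1 : ℝ) / 2) : ℝ) : ℂ) * Complex.exp (Complex.I * θ / 2)))))‖
          / Real.log (r + f⁻¹) := by
  obtain ⟨f₀, hf₀, C, hC, H⟩ := exists_norm_Df_sub_le hκ hη ha0 ha1 hM
  refine ⟨f₀, hf₀, C, hC, fun f hf hff r θ hfr h1 h2 => ?_⟩
  have hr : 0 < r := (Real.rpow_pos_of_pos hf a).trans hfr
  have hp : 0 < r ^ ((1 : ℝ) / 2) := by positivity
  have hp2 : (r ^ ((1 : ℝ) / 2)) ^ 2 = r := by
    rw [← Real.rpow_natCast, ← Real.rpow_mul hr.le]; norm_num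
  have hp3 : (r ^ ((1 : ℝ) / 2)) ^ 3 = r ^ ((3 : ℝ) / 2) := by
    rw [← Real.rpow_natCast, ← Real.rpow_mul hr.le]; norm_num
  have hd : r ^ (-(3 : ℝ) / 2) * M * f * Real.log (r + f⁻¹) =
      M * f * Real.log (r + f⁻¹) / (r ^ ((1 : ℝ) / 2)) ^ 3 := by
    rw [hp3, neg_div, Real.rpow_neg hr.le]; ring
  rw [hd] at h1 h2
  have hE : Complex.exp (-(((-(θ / 2) : ℝ) : ℂ) * Complex.I)) =
      Complex.exp (Complex.I * θ / 2) := by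
    congr 1; push_cast; ring
  have key := H f (r ^ ((1 : ℝ) / 2)) (-(θ / 2)) (Real.log (r + f⁻¹))
    (((r ^ ((1 : ℝ) / 2) : ℝ) : ℂ) * Complex.exp (Complex.I * θ / 2)) hf hff hp
    (by rw [hp2]; exact hfr) (by rw [hp2]) (by linarith) (by linarith) (by rw [hE])
  have hq2 : (((r ^ ((1 : ℝ) / 2) : ℝ) : ℂ) * Complex.exp (Complex.I * θ / 2)) ^ 2 =
      (r : ℂ) * Complex.exp (Complex.I * θ) := by
    rw [mul_pow, ← Complex.ofReal_pow, hp2, ← Complex.exp_nat_mul]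
    congr 2; push_cast; ring
  have hq3 : (((r ^ ((1 : ℝ) / 2) : ℝ) : ℂ) * Complex.exp (Complex.I * θ / 2)) ^ 3 =
      ((r ^ ((3 : ℝ) / 2) : ℝ) : ℂ) * Complex.exp (3 * Complex.I * θ / 2) := by
    rw [mul_pow, ← Complex.ofReal_pow, hp3, ← Complex.exp_nat_mul]
    congr 2; push_cast; ring
  have hphase : ∀ x : ℂ, 4 / 3 * Complex.I * x / f = Complex.I * 4 * x / (3 * f) := by
    intro x; ring
  rw [hq2, hq3, hphase] at key
  exact key
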